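/- arXiv:2509.18964 — 6 statements merged into one kernel-verified Lean document; each statement's English description precedes it below -/
import Mathlib

section
/- Sandwich property of asynchronous Q-learning errors (Lemma 1). In the finite MDP setting, let p : S×A → [0,1], let D be the diagonal operator on ℝ^{S×A} with (DQ)(s,a) = p(s,a)Q(s,a), let Q* satisfy T(Q*) = Q*, let π* be greedy with respect to Q*, and for each k ≥ 0 let π_k be greedy with respect to Q_k. Suppose the iterates satisfy Q_{k+1} = Q_k + α_k(F_k − Q_k) with α_k ∈ [0,1] and arbitrary F_k ∈ ℝ^{S×A}, and set F̄_k := D T(Q_k) + (I−D)Q_k and Δ_k := Q_k − Q*. Define Δ↑_0 = Δ↓_0 = Δ_0 and Δ↑_{k+1} = (I − α_k D + α_k γ D P^{π*}) Δ↑_k + α_k γ D (P^{π_k} − P^{π*}) Δ_k + α_k (F_k − F̄_k), and Δ↓_{k+1} = (I − α_k D + α_k γ D P^{π*}) Δ↓_k + α_k (F_k − F̄_k). Then Δ↓_k ≤ Δ_k ≤ Δ↑_k entrywise for every k ≥ 0. -/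
open Finset

/-!
If `π` is greedy for `Q` and `π'` is greedy for `Q'`, then exchanging one greedy policy for the
other only decreases the respective maximum, so
`γ P^π' (Q - Q') ≤ T Q - T Q' ≤ γ P^π (Q - Q')`.
With `Q' = Q*` this makes the error `Q_k - Q*` a supersolution of the recursion of `Δ↓` and a
subsolution of that of `Δ↑`. Both recursions have the same linear part `I - α D + α γ D P^{π*}`,
which is monotone because its coefficients are nonnegative, so the initial ordering persists.
-/

theorem le_of_succ_le_map_of_map_le_succ {X : Type*} [Preorder X] {f : ℕ → X → X} {x y : ℕ → X}
    (hf : ∀ k, Monotone (f k)) (h0 : x 0 ≤ y 0) (hx : ∀ k, x (k + 1) ≤ f k (x k))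
    (hy : ∀ k, f k (y k) ≤ y (k + 1)) (k : ℕ) : x k ≤ y k := by
  induction k with
  | zero => exact h0
  | succ k ih => exact (hx k).trans ((hf k ih).trans (hy k))

namespace QLearning

variable {S A : Type*}

/-- The policy `π` is greedy with respect to `Q`: at every state it picks an action of maximal
value. Stated by inequalities so that it entails attainment when `A` is infinite. -/
def IsGreedy (Q : S → A → ℝ) (π : S → A) : Prop :=
  ∀ s a, Q s a ≤ Q s (π s)

theorem IsGreedy.iSup_eq {Q : S → A → ℝ} {π : S → A} (hπ : IsGreedy Q π) (s : S) :
    ⨆ a, Q s a = Q s (π s) :=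
  IsGreatest.csSup_eq ⟨⟨π s, rfl⟩, Set.forall_mem_range.2 (hπ s)⟩

theorem isGreedy_of_eq_iSup [Finite A] {Q : S → A → ℝ} {π : S → A}
    (h : ∀ s, Q s (π s) = ⨆ a, Q s a) : IsGreedy Q π :=
  fun s a => (le_ciSup (Set.finite_range (Q s)).bddAbove a).trans_eq (h s).symm

variable [Fintype S]

/-- The linear map `P^π` on action-value functions: the expected value, under the transition
kernel `P`, of the next state with its action chosen by `π`. -/
def policyOperator (P : S → A → S → ℝ) (π : S → A) : (S → A → ℝ) →ₗ[ℝ] (S → A → ℝ) where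
  toFun Q s a := ∑ s', P s a s' * Q s' (π s')
  map_add' Q Q' := by
    ext s a
    simp only [Pi.add_apply, mul_add, sum_add_distrib]
  map_smul' c Q := by
    ext s a
    simp only [Pi.smul_apply, smul_eq_mul, RingHom.id_apply, mul_sum, mul_left_comm]

/-- The Bellman optimality operator `T`. The maximum over actions is a supremum, which is
meaningful for infinite `A` whenever a greedy policy exists. -/
noncomputable def bellmanOperator (P : S → A → S → ℝ) (r : S → A → ℝ) (γ : ℝ)
    (Q : S → A → ℝ) : S → A → ℝ :=
  fun s a => r s a + γ * ∑ s', P s a s' * ⨆ a', Q s' a'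

/-- The expected asynchronous update `D T(Q) + (I - D) Q`, where the diagonal operator `D` is
pointwise multiplication by `p`. -/
noncomputable def expectedUpdate (P : S → A → S → ℝ) (r : S → A → ℝ) (γ : ℝ) (p : S → A → ℝ)
    (Q : S → A → ℝ) : S → A → ℝ :=
  p * bellmanOperator P r γ Q + (1 - p) * Q

/-- The operator `I - α D + α γ D P^π` propagating the comparison errors, where the diagonal
operator `D` is pointwise multiplication by `p`. -/
def errorPropagator (P : S → A → S → ℝ) (γ : ℝ) (p : S → A → ℝ) (π : S → A) (α : ℝ)
    (Δ : S → A → ℝ) : S → A → ℝ :=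
  Δ - α • (p * Δ) + (α * γ) • (p * policyOperator P π Δ)

variable {P : S → A → S → ℝ} {r : S → A → ℝ} {γ : ℝ} {p : S → A → ℝ} {π π' : S → A}
  {Q Q' : S → A → ℝ} {α : ℝ}

theorem policyOperator_monotone (hP : 0 ≤ P) (π : S → A) : Monotone (policyOperator P π) :=
  fun _ _ h s a => sum_le_sum fun s' _ => mul_le_mul_of_nonneg_left (h s' (π s')) (hP s a s')

theorem IsGreedy.policyOperator_le (hπ : IsGreedy Q π) (hP : 0 ≤ P) (π' : S → A) :
    policyOperator P π' Q ≤ policyOperator P π Q :=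
  fun s a => sum_le_sum fun s' _ => mul_le_mul_of_nonneg_left (hπ s' (π' s')) (hP s a s')

theorem IsGreedy.bellmanOperator_eq (hπ : IsGreedy Q π) :
    bellmanOperator P r γ Q = r + γ • policyOperator P π Q := by
  ext s a
  simp only [bellmanOperator, hπ.iSup_eq]
  rfl

theorem IsGreedy.bellmanOperator_sub (hπ : IsGreedy Q π) (hπ' : IsGreedy Q' π') :
    bellmanOperator P r γ Q - bellmanOperator P r γ Q' =
      γ • (policyOperator P π Q - policyOperator P π' Q') := by
  rw [hπ.bellmanOperator_eq, hπ'.bellmanOperator_eq, add_sub_add_left_eq_sub, smul_sub]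

theorem smul_policyOperator_sub_le_bellmanOperator_sub (hP : 0 ≤ P) (hγ : 0 ≤ γ)
    (hπ : IsGreedy Q π) (hπ' : IsGreedy Q' π') :
    γ • policyOperator P π' (Q - Q') ≤ bellmanOperator P r γ Q - bellmanOperator P r γ Q' := by
  rw [hπ.bellmanOperator_sub hπ', map_sub]
  exact smul_le_smul_of_nonneg_left (sub_le_sub_right (hπ.policyOperator_le hP π') _) hγ

theorem bellmanOperator_sub_le_smul_policyOperator_sub (hP : 0 ≤ P) (hγ : 0 ≤ γ)
    (hπ : IsGreedy Q π) (hπ' : IsGreedy Q' π') :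
    bellmanOperator P r γ Q - bellmanOperator P r γ Q' ≤ γ • policyOperator P π (Q - Q') := by
  rw [hπ.bellmanOperator_sub hπ', map_sub]
  exact smul_le_smul_of_nonneg_left (sub_le_sub_left (hπ'.policyOperator_le hP π) _) hγ

theorem errorPropagator_monotone (hP : 0 ≤ P) (hγ : 0 ≤ γ) (hp : 0 ≤ p) (hα : 0 ≤ α)
    (hαp : α • p ≤ 1) (π : S → A) : Monotone (errorPropagator P γ p π α) := by
  have diagonal_eq (Δ : S → A → ℝ) : Δ - α • (p * Δ) = (1 - α • p) * Δ := by
    rw [sub_mul, one_mul, smul_mul_assoc]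
  intro Δ Δ' h
  simp only [errorPropagator, diagonal_eq]
  exact add_le_add (mul_le_mul_of_nonneg_left h (sub_nonneg.2 hαp))
    (smul_le_smul_of_nonneg_left
      (mul_le_mul_of_nonneg_left (policyOperator_monotone hP π h) hp) (mul_nonneg hα hγ))

theorem errorPropagator_add_policyOperator_sub (π π' : S → A) (Δ : S → A → ℝ) :
    errorPropagator P γ p π' α Δ
        + (α * γ) • (p * (policyOperator P π Δ - policyOperator P π' Δ)) =
      errorPropagator P γ p π α Δ := by
  rw [errorPropagator, errorPropagator, add_assoc, ← smul_add, ← mul_add, add_sub_cancel]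

theorem update_sub_fixedPoint_eq (hQ' : bellmanOperator P r γ Q' = Q') (F : S → A → ℝ) :
    Q + α • (F - Q) - Q' =
      (Q - Q') - α • (p * (Q - Q'))
        + α • (p * (bellmanOperator P r γ Q - bellmanOperator P r γ Q'))
        + α • (F - expectedUpdate P r γ p Q) := by
  rw [hQ', expectedUpdate]
  ext s a
  simp only [Pi.add_apply, Pi.sub_apply, Pi.smul_apply, Pi.mul_apply, Pi.one_apply, smul_eq_mul]
  ring

theorem errorPropagator_add_le_update_sub_fixedPoint (hP : 0 ≤ P) (hγ : 0 ≤ γ) (hp : 0 ≤ p)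
    (hα : 0 ≤ α) (hπ : IsGreedy Q π) (hπ' : IsGreedy Q' π')
    (hQ' : bellmanOperator P r γ Q' = Q') (F : S → A → ℝ) :
    errorPropagator P γ p π' α (Q - Q') + α • (F - expectedUpdate P r γ p Q) ≤
      Q + α • (F - Q) - Q' := by
  rw [update_sub_fixedPoint_eq (p := p) hQ', errorPropagator, mul_smul,
    ← mul_smul_comm γ p]
  gcongr
  exact smul_policyOperator_sub_le_bellmanOperator_sub hP hγ hπ hπ'

theorem update_sub_fixedPoint_le_errorPropagator_add (hP : 0 ≤ P) (hγ : 0 ≤ γ) (hp : 0 ≤ p)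
    (hα : 0 ≤ α) (hπ : IsGreedy Q π) (hπ' : IsGreedy Q' π')
    (hQ' : bellmanOperator P r γ Q' = Q') (F : S → A → ℝ) :
    Q + α • (F - Q) - Q' ≤
      errorPropagator P γ p π α (Q - Q') + α • (F - expectedUpdate P r γ p Q) := by
  rw [update_sub_fixedPoint_eq (p := p) hQ', errorPropagator, mul_smul, ← mul_smul_comm γ p]
  gcongr
  exact bellmanOperator_sub_le_smul_policyOperator_sub hP hγ hπ hπ'

end QLearning

open QLearning

theorem sandwich_property_asynchronous_Q_learning_general
    {S A : Type*} [Fintype S] {P : S → A → S → ℝ} (hP : 0 ≤ P) {r : S → A → ℝ}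
    {γ : ℝ} (hγ : 0 ≤ γ) {p : S → A → ℝ} (hp : 0 ≤ p)
    {Qstar : S → A → ℝ} (hQstar : bellmanOperator P r γ Qstar = Qstar)
    {πstar : S → A} (hπstar : IsGreedy Qstar πstar)
    {Q F : ℕ → S → A → ℝ} {α : ℕ → ℝ} (hα : ∀ k, 0 ≤ α k) (hαp : ∀ k, α k • p ≤ 1)
    (hQ : ∀ k, Q (k + 1) = Q k + α k • (F k - Q k))
    {π : ℕ → S → A} (hπ : ∀ k, IsGreedy (Q k) (π k))
    {Δup Δdown : ℕ → S → A → ℝ} (hup0 : Δup 0 = Q 0 - Qstar) (hdown0 : Δdown 0 = Q 0 - Qstar)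
    (hup : ∀ k, Δup (k + 1) =
      errorPropagator P γ p πstar (α k) (Δup k)
        + (α k * γ) • (p * (policyOperator P (π k) (Q k - Qstar)
          - policyOperator P πstar (Q k - Qstar)))
        + α k • (F k - expectedUpdate P r γ p (Q k)))
    (hdown : ∀ k, Δdown (k + 1) =
      errorPropagator P γ p πstar (α k) (Δdown k)
        + α k • (F k - expectedUpdate P r γ p (Q k)))
    (k : ℕ) : Δdown k ≤ Q k - Qstar ∧ Q k - Qstar ≤ Δup k := by
  have propagator_mono (k : ℕ) : Monotone (errorPropagator P γ p πstar (α k)) :=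
    errorPropagator_monotone hP hγ hp (hα k) (hαp k) πstar
  constructor
  · refine le_of_succ_le_map_of_map_le_succ (y := fun k => Q k - Qstar)
      (fun k => (propagator_mono k).add_const _) hdown0.le (fun k => (hdown k).le) (fun k => ?_) k
    simp only [hQ k]
    exact errorPropagator_add_le_update_sub_fixedPoint hP hγ hp (hα k) (hπ k) hπstar hQstar (F k)
  · refine le_of_succ_le_map_of_map_le_succ (x := fun k => Q k - Qstar)
      (fun k => ((propagator_mono k).add_const _).add_const _) hup0.ge (fun k => ?_)
      (fun k => (hup k).ge) k
    simp only [hQ k, errorPropagator_add_policyOperator_sub]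
    exact update_sub_fixedPoint_le_errorPropagator_add hP hγ hp (hα k) (hπ k) hπstar hQstar (F k)

/-- Sandwich property of asynchronous Q-learning errors (Lemma 1). -/
theorem sandwich_property_asynchronous_Q_learning
    {S A : Type*} [Fintype S] [Fintype A] [Nonempty S] [Nonempty A]
    (P : S → A → S → ℝ)
    (hPnn : ∀ s a s', 0 ≤ P s a s')
    (hPsum : ∀ s a, ∑ s', P s a s' = 1)
    (r : S → A → ℝ) (γ : ℝ) (hγ0 : 0 ≤ γ) (hγ1 : γ < 1)
    (p : S → A → ℝ) (hp0 : ∀ s a, 0 ≤ p s a) (hp1 : ∀ s a, p s a ≤ 1)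
    -- Bellman optimality operator
    (T : (S → A → ℝ) → (S → A → ℝ))
    (hT : ∀ Q s a, T Q s a =
      r s a + γ * ∑ s', P s a s' * (univ.sup' univ_nonempty (fun a' => Q s' a')))
    -- the linear map P^π induced by a deterministic policy π
    (Pol : (S → A) → (S → A → ℝ) → (S → A → ℝ))
    (hPol : ∀ π Q s a, Pol π Q s a = ∑ s', P s a s' * Q s' (π s'))
    -- optimal Q-function and a greedy optimal policy
    (Qstar : S → A → ℝ) (hQstar : ∀ s a, T Qstar s a = Qstar s a)
    (πstar : S → A)
    (hπstar : ∀ s, Qstar s (πstar s) = univ.sup' univ_nonempty (fun a => Qstar s a))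
    -- the iterates
    (Q : ℕ → S → A → ℝ) (α : ℕ → ℝ) (hα0 : ∀ k, 0 ≤ α k) (hα1 : ∀ k, α k ≤ 1)
    (F : ℕ → S → A → ℝ)
    (hQrec : ∀ k s a, Q (k+1) s a = Q k s a + α k * (F k s a - Q k s a))
    -- greedy policies w.r.t. the iterates
    (πk : ℕ → S → A)
    (hπk : ∀ k s, Q k s (πk k s) = univ.sup' univ_nonempty (fun a => Q k s a))
    -- expected operator F̄_k = D T(Q_k) + (I - D) Q_k
    (Fbar : ℕ → S → A → ℝ)
    (hFbar : ∀ k s a, Fbar k s a = p s a * T (Q k) s a + (1 - p s a) * Q k s a)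
    -- the upper and lower comparison processes
    (Δup Δdown : ℕ → S → A → ℝ)
    (hup0 : ∀ s a, Δup 0 s a = Q 0 s a - Qstar s a)
    (hdown0 : ∀ s a, Δdown 0 s a = Q 0 s a - Qstar s a)
    (hup : ∀ k s a, Δup (k+1) s a =
      Δup k s a - α k * (p s a * Δup k s a) + α k * γ * (p s a * Pol πstar (Δup k) s a)
      + α k * γ * (p s a *
          (Pol (πk k) (fun s' a' => Q k s' a' - Qstar s' a') s a
            - Pol πstar (fun s' a' => Q k s' a' - Qstar s' a') s a))
      + α k * (F k s a - Fbar k s a))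
    (hdown : ∀ k s a, Δdown (k+1) s a =
      Δdown k s a - α k * (p s a * Δdown k s a) + α k * γ * (p s a * Pol πstar (Δdown k) s a)
      + α k * (F k s a - Fbar k s a)) :
    ∀ k s a, Δdown k s a ≤ Q k s a - Qstar s a ∧ Q k s a - Qstar s a ≤ Δup k s a := by
  simp only [sup'_univ_eq_ciSup] at hT hπstar hπk
  obtain rfl : T = bellmanOperator P r γ := funext fun Q => funext₂ (hT Q)
  obtain rfl : Pol = fun π Q => policyOperator P π Q := funext₂ fun π Q => funext₂ (hPol π Q)
  obtain rfl : Fbar = fun k => expectedUpdate P r γ p (Q k) := funext fun k => funext₂ (hFbar k)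
  have sandwich := sandwich_property_asynchronous_Q_learning_general hPnn hγ0 hp0
    (funext₂ hQstar) (isGreedy_of_eq_iSup hπstar) hα0
    (fun k s a => mul_le_one₀ (hα1 k) (hp0 s a) (hp1 s a)) (fun k => funext₂ (hQrec k))
    (fun k => isGreedy_of_eq_iSup (hπk k)) (funext₂ hup0) (funext₂ hdown0)
    (fun k => funext₂ (hup k)) (fun k => funext₂ (hdown k))
  exact fun k s a => ⟨(sandwich k).1 s a, (sandwich k).2 s a⟩
end

section
/- Contraction and nonnegativity of the one-step matrix. Let n ≥ 1, let D be an n×n real diagonal matrix whose diagonal entries p_i satisfy ρ ≤ p_i ≤ 1 for some ρ > 0, let P be an n×n row-stochastic matrix, let γ ∈ [0,1), and let α ∈ [0,1]. Then (i) every entry of the matrix I − αD + αγDP is nonnegative, and (ii) ‖I − αD(I − γP)‖∞ ≤ 1 − αρ(1−γ), where ‖M‖∞ denotes the ℓ∞→ℓ∞ operator norm (maximum absolute row sum). -/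
open Finset

/-- ℓ∞→ℓ∞ operator norm of a matrix: maximum absolute row sum. -/
noncomputable def normInf {n : Type*} [Fintype n] [Nonempty n] (M : Matrix n n ℝ) : ℝ :=
  Finset.univ.sup' Finset.univ_nonempty (fun i => ∑ j, |M i j|)

section NormInf

variable {n : Type*} [Fintype n] [Nonempty n] {M : Matrix n n ℝ} {c : ℝ}

theorem normInf_le_iff : normInf M ≤ c ↔ ∀ i, ∑ j, |M i j| ≤ c := by
  simp only [normInf, Finset.sup'_le_iff, Finset.mem_univ, true_imp_iff]

theorem normInf_le_of_nonneg_of_sum_le (hM : ∀ i j, 0 ≤ M i j) (hsum : ∀ i, ∑ j, M i j ≤ c) :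
    normInf M ≤ c := by
  simpa only [normInf_le_iff, abs_of_nonneg (hM _ _)] using hsum

end NormInf

section RelaxedMatrix

variable {n R : Type*} [Fintype n] [DecidableEq n]

/-- The relaxation `I - diag(d) (I - Q)` of the matrix `Q` with rowwise weights `d`: its `i`-th row
lies the fraction `d i` of the way from the `i`-th row of `I` to the `i`-th row of `Q`. The one-step
matrix is the case `d = α p`, `Q = γ P`. -/
def relaxedMatrix [Ring R] (d : n → R) (Q : Matrix n n R) : Matrix n n R :=
  1 - Matrix.diagonal d * (1 - Q)

theorem relaxedMatrix_apply [Ring R] (d : n → R) (Q : Matrix n n R) (i j : n) :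
    relaxedMatrix d Q i j = (1 - d i) * (1 : Matrix n n R) i j + d i * Q i j := by
  simp only [relaxedMatrix, Matrix.sub_apply, Matrix.diagonal_mul]
  noncomm_ring

theorem relaxedMatrix_smul_smul [CommRing R] (a c : R) (p : n → R) (P : Matrix n n R) :
    relaxedMatrix (a • p) (c • P) = 1 - a • (Matrix.diagonal p * (1 - c • P)) := by
  rw [relaxedMatrix, Matrix.diagonal_smul, Matrix.smul_mul]

theorem relaxedMatrix_smul_smul_eq_add [CommRing R] (a c : R) (p : n → R) (P : Matrix n n R) :
    relaxedMatrix (a • p) (c • P) =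
      1 - a • Matrix.diagonal p + (a * c) • (Matrix.diagonal p * P) := by
  rw [relaxedMatrix_smul_smul, mul_sub, mul_one, smul_sub, Matrix.mul_smul, smul_smul, sub_add]

theorem relaxedMatrix_apply_nonneg [Ring R] [PartialOrder R] [IsOrderedRing R] {d : n → R}
    {Q : Matrix n n R} {i j : n} (hd₀ : 0 ≤ d i) (hd₁ : d i ≤ 1) (hQ : 0 ≤ Q i j) :
    0 ≤ relaxedMatrix d Q i j := by
  have one_apply_nonneg : 0 ≤ (1 : Matrix n n R) i j :=
    Matrix.nonneg_of_mem_rowStochastic (one_mem _)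
  rw [relaxedMatrix_apply]
  exact add_nonneg (mul_nonneg (sub_nonneg.2 hd₁) one_apply_nonneg) (mul_nonneg hd₀ hQ)

theorem sum_abs_relaxedMatrix_le [Ring R] [LinearOrder R] [IsOrderedRing R] {d : n → R}
    {Q : Matrix n n R} {i : n} (hd₀ : 0 ≤ d i) (hd₁ : d i ≤ 1) :
    ∑ j, |relaxedMatrix d Q i j| ≤ (1 - d i) + d i * ∑ j, |Q i j| := by
  have sum_abs_one : ∑ j, |(1 : Matrix n n R) i j| = 1 := by
    simp [Matrix.one_apply, apply_ite abs]
  calc ∑ j, |relaxedMatrix d Q i j|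
      ≤ ∑ j, ((1 - d i) * |(1 : Matrix n n R) i j| + d i * |Q i j|) := by
        refine Finset.sum_le_sum fun j _ => ?_
        rw [relaxedMatrix_apply]
        refine (abs_add_le _ _).trans_eq ?_
        rw [abs_mul, abs_mul, abs_of_nonneg (sub_nonneg.2 hd₁), abs_of_nonneg hd₀]
    _ = (1 - d i) + d i * ∑ j, |Q i j| := by
        rw [Finset.sum_add_distrib, ← Finset.mul_sum, ← Finset.mul_sum, sum_abs_one, mul_one]

theorem normInf_relaxedMatrix_le [Nonempty n] {d : n → ℝ} {Q : Matrix n n ℝ} {δ c : ℝ}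
    (hδ : 0 ≤ δ) (hδd : ∀ i, δ ≤ d i) (hd₁ : ∀ i, d i ≤ 1) (hc : c ≤ 1) (hQ : normInf Q ≤ c) :
    normInf (relaxedMatrix d Q) ≤ 1 - δ * (1 - c) := by
  refine normInf_le_iff.2 fun i => ?_
  have hd₀ : 0 ≤ d i := hδ.trans (hδd i)
  calc ∑ j, |relaxedMatrix d Q i j|
      ≤ (1 - d i) + d i * ∑ j, |Q i j| := sum_abs_relaxedMatrix_le hd₀ (hd₁ i)
    _ ≤ (1 - d i) + d i * c := by gcongr; exact normInf_le_iff.1 hQ i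
    _ = 1 - d i * (1 - c) := by ring
    _ ≤ 1 - δ * (1 - c) := by
        have := sub_nonneg.2 hc
        gcongr
        exact hδd i

end RelaxedMatrix

theorem contraction_and_nonnegativity_one_step_matrix_general
    {n : Type*} [Fintype n] [Nonempty n] [DecidableEq n]
    (p : n → ℝ) (ρ : ℝ) (hρ : 0 ≤ ρ) (hp : ∀ i, ρ ≤ p i)
    (P : Matrix n n ℝ) (hPnn : ∀ i j, 0 ≤ P i j) (hPsum : ∀ i, ∑ j, P i j ≤ 1)
    (γ : ℝ) (hγ0 : 0 ≤ γ) (hγ1 : γ ≤ 1)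
    (α : ℝ) (hα0 : 0 ≤ α) (hαp : ∀ i, α * p i ≤ 1) :
    (∀ i j, 0 ≤ ((1 : Matrix n n ℝ) - α • Matrix.diagonal p
        + (α * γ) • (Matrix.diagonal p * P)) i j) ∧
      normInf ((1 : Matrix n n ℝ)
          - α • (Matrix.diagonal p * ((1 : Matrix n n ℝ) - γ • P))) ≤
        1 - α * ρ * (1 - γ) := by
  have hγP : ∀ i j, 0 ≤ (γ • P) i j := fun i j => mul_nonneg hγ0 (hPnn i j)
  have hγP_sum : ∀ i, ∑ j, (γ • P) i j ≤ γ := fun i => by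
    simpa only [Matrix.smul_apply, smul_eq_mul, ← Finset.mul_sum]
      using mul_le_of_le_one_right hγ0 (hPsum i)
  rw [← relaxedMatrix_smul_smul_eq_add, ← relaxedMatrix_smul_smul]
  constructor
  · exact fun i j =>
      relaxedMatrix_apply_nonneg (mul_nonneg hα0 (hρ.trans (hp i))) (hαp i) (hγP i j)
  · exact normInf_relaxedMatrix_le (mul_nonneg hα0 hρ)
      (fun i => mul_le_mul_of_nonneg_left (hp i) hα0) hαp hγ1
      (normInf_le_of_nonneg_of_sum_le hγP hγP_sum)

/-- Contraction and nonnegativity of the one-step matrix. -/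
theorem contraction_and_nonnegativity_one_step_matrix
    {n : Type*} [Fintype n] [Nonempty n] [DecidableEq n]
    (p : n → ℝ) (ρ : ℝ) (hρ : 0 < ρ)
    (hp : ∀ i, ρ ≤ p i ∧ p i ≤ 1)
    (P : Matrix n n ℝ) (hPnn : ∀ i j, 0 ≤ P i j) (hPsum : ∀ i, ∑ j, P i j = 1)
    (γ : ℝ) (hγ0 : 0 ≤ γ) (hγ1 : γ < 1)
    (α : ℝ) (hα0 : 0 ≤ α) (hα1 : α ≤ 1) :
    (∀ i j, 0 ≤ ((1 : Matrix n n ℝ) - α • Matrix.diagonal p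
        + (α * γ) • (Matrix.diagonal p * P)) i j) ∧
      normInf ((1 : Matrix n n ℝ)
          - α • (Matrix.diagonal p * ((1 : Matrix n n ℝ) - γ • P))) ≤
        1 - α * ρ * (1 - γ) :=
  contraction_and_nonnegativity_one_step_matrix_general p ρ hρ.le (fun i => (hp i).1) P hPnn
    (fun i => (hPsum i).le) γ hγ0 hγ1.le α hα0
    fun i => mul_le_one₀ hα1 (hρ.le.trans (hp i).1) (hp i).2
end

section
/- Sum of products bound for polynomial step sizes (first bound of Lemma 4). Let β ∈ (0,1) and b > 0. There exists a constant C > 0 depending only on β and b such that for every c ∈ (0, min(1, b^β)] and every integer K ≥ 1: ∑_{k=1}^K ∏_{i=0}^{k-1} (1 − c(i+b)^{−β}) ≤ C · c^{−1/(1−β)}. -/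
open Finset

/-!
Put `x = c ^ (-1 / (1 - β))`, so that `c = x ^ (β - 1)`. The potential `V i = max (i + b) x ^ β`
grows by at most `β * c` per step, because `s ↦ s ^ β` has slope at most `β * x ^ (β - 1)` on
`[x, ∞)`, while the factor `1 - c * (i + b) ^ (-β)` removes at least `c` from `V (i + 1)`.
Hence that factor times `V (i + 1)` is at most `V i - (1 - β) * c`, and telescoping bounds the sum
of the products by `V 0 / ((1 - β) * c)`. This is of order `x`, because `c ≤ b ^ β` forces `b` to be
at most a constant times `x`, so that `V 0` is at most a constant times `x ^ β = c * x`.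
-/

theorem mul_sum_prod_range_add_prod_mul_le {R : Type*} [CommSemiring R] [PartialOrder R]
    [IsOrderedRing R] {f V : ℕ → R} {δ : R} (hf : ∀ i, 0 ≤ f i)
    (hV : ∀ i, δ + f i * V (i + 1) ≤ V i) (n : ℕ) :
    δ * ∑ k ∈ range n, ∏ i ∈ range k, f i + (∏ i ∈ range n, f i) * V n ≤ V 0 := by
  induction n with
  | zero => simp
  | succ n ih =>
    have hprod : 0 ≤ ∏ i ∈ range n, f i := prod_nonneg fun i _ ↦ hf i
    rw [sum_range_succ, prod_range_succ]
    calc δ * (∑ k ∈ range n, ∏ i ∈ range k, f i + ∏ i ∈ range n, f i) +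
          (∏ i ∈ range n, f i) * f n * V (n + 1)
        = δ * ∑ k ∈ range n, ∏ i ∈ range k, f i +
          (∏ i ∈ range n, f i) * (δ + f n * V (n + 1)) := by ring
      _ ≤ δ * ∑ k ∈ range n, ∏ i ∈ range k, f i + (∏ i ∈ range n, f i) * V n := by
        gcongr
        exact hV n
      _ ≤ V 0 := ih

section PowerBounds

variable {β b c t x : ℝ}

theorem add_one_rpow_le (hx : 0 < x) (hβ0 : 0 ≤ β) (hβ1 : β ≤ 1) :
    (x + 1) ^ β ≤ x ^ β + β * x ^ (β - 1) := by
  have hx' : 0 < x⁻¹ := inv_pos.2 hx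
  calc (x + 1) ^ β = x ^ β * (1 + x⁻¹) ^ β := by
        rw [← Real.mul_rpow hx.le (by positivity), mul_add, mul_one, mul_inv_cancel₀ hx.ne']
    _ ≤ x ^ β * (1 + β * x⁻¹) := by
        gcongr
        exact rpow_one_add_le_one_add_mul_self (by linarith) hβ0 hβ1
    _ = x ^ β + β * x ^ (β - 1) := by
        rw [Real.rpow_sub_one hx.ne']
        ring

theorem max_add_one_rpow_le (hx : 0 < x) (hβ0 : 0 ≤ β) (hβ1 : β ≤ 1) :
    max (t + 1) x ^ β ≤ max t x ^ β + β * x ^ (β - 1) := by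
  have hmax : 0 < max t x := lt_max_of_lt_right hx
  calc max (t + 1) x ^ β ≤ (max t x + 1) ^ β := by
        gcongr
        exact max_le (by gcongr; exact le_max_left t x) (by linarith [le_max_right t x])
    _ ≤ max t x ^ β + β * max t x ^ (β - 1) := add_one_rpow_le hmax hβ0 hβ1
    _ ≤ max t x ^ β + β * x ^ (β - 1) := by
        gcongr _ + β * ?_
        exact Real.rpow_le_rpow_of_nonpos hx (le_max_right t x) (by linarith)

theorem one_sub_mul_rpow_neg_nonneg (ht : 0 < t) (hc : c ≤ t ^ β) :
    0 ≤ 1 - c * t ^ (-β) := by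
  rw [Real.rpow_neg ht.le, ← div_eq_mul_inv, sub_nonneg]
  exact div_le_one_of_le₀ hc (Real.rpow_nonneg ht.le β)

theorem add_one_sub_mul_max_add_one_rpow_le (ht : 0 < t) (hx : 0 < x) (hβ0 : 0 ≤ β)
    (hβ1 : β ≤ 1) :
    (1 - β) * x ^ (β - 1) + (1 - x ^ (β - 1) * t ^ (-β)) * max (t + 1) x ^ β ≤
      max t x ^ β := by
  have hone : 1 ≤ t ^ (-β) * max (t + 1) x ^ β := by
    rw [Real.rpow_neg ht.le, inv_mul_eq_div, one_le_div (by positivity)]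
    gcongr
    exact le_max_of_le_left (by linarith)
  have hremove : x ^ (β - 1) ≤ x ^ (β - 1) * (t ^ (-β) * max (t + 1) x ^ β) :=
    le_mul_of_one_le_right (by positivity) hone
  linarith [max_add_one_rpow_le (t := t) hx hβ0 hβ1]

theorem le_rpow_mul_of_rpow_sub_one_le (hb : 0 < b) (hx : 0 < x) (hβ1 : β < 1)
    (h : x ^ (β - 1) ≤ b ^ β) : b ≤ b ^ (1 / (1 - β)) * x := by
  have hβ : 0 < 1 - β := sub_pos.2 hβ1
  have hinv : x⁻¹ ≤ b ^ (β / (1 - β)) := by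
    calc x⁻¹ = (x ^ (β - 1)) ^ (1 / (1 - β)) := by
          rw [← Real.rpow_mul hx.le, ← Real.rpow_neg_one]
          congr 1
          field_simp
          ring
      _ ≤ (b ^ β) ^ (1 / (1 - β)) := by gcongr
      _ = b ^ (β / (1 - β)) := by rw [← Real.rpow_mul hb.le, mul_one_div]
  calc b = b * x⁻¹ * x := by field_simp
    _ ≤ b * b ^ (β / (1 - β)) * x := by gcongr
    _ = b ^ (1 + β / (1 - β)) * x := by rw [Real.rpow_add hb, Real.rpow_one]
    _ = b ^ (1 / (1 - β)) * x := by
      congr 2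
      field_simp
      ring

end PowerBounds

section SumOfProducts

variable {β b x : ℝ}

theorem sum_prod_one_sub_mul_rpow_neg_le (hβ0 : 0 ≤ β) (hβ1 : β < 1) (hb : 0 < b) (hx : 0 < x)
    (hxb : x ^ (β - 1) ≤ b ^ β) (n : ℕ) :
    ∑ k ∈ range n, ∏ i ∈ range k, (1 - x ^ (β - 1) * ((i : ℝ) + b) ^ (-β)) ≤
      max b x ^ β / ((1 - β) * x ^ (β - 1)) := by
  have hfactor (i : ℕ) : 0 ≤ 1 - x ^ (β - 1) * ((i : ℝ) + b) ^ (-β) :=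
    one_sub_mul_rpow_neg_nonneg (by positivity) <| hxb.trans <| by
      gcongr
      exact le_add_of_nonneg_left i.cast_nonneg
  have hpotential (i : ℕ) :
      (1 - β) * x ^ (β - 1) + (1 - x ^ (β - 1) * ((i : ℝ) + b) ^ (-β)) *
        max (((i + 1 : ℕ) : ℝ) + b) x ^ β ≤ max ((i : ℝ) + b) x ^ β := by
    rw [Nat.cast_add_one, add_right_comm]
    exact add_one_sub_mul_max_add_one_rpow_le (by positivity) hx hβ0 hβ1.le
  have htelescope := mul_sum_prod_range_add_prod_mul_le
    (V := fun i : ℕ ↦ max ((i : ℝ) + b) x ^ β) hfactor hpotential n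
  rw [Nat.cast_zero, zero_add] at htelescope
  rw [le_div_iff₀' (mul_pos (sub_pos.2 hβ1) (by positivity))]
  refine le_of_add_le_of_nonneg_left htelescope ?_
  exact mul_nonneg (prod_nonneg fun i _ ↦ hfactor i) (by positivity)

theorem max_rpow_div_le (hβ0 : 0 ≤ β) (hβ1 : β < 1) (hb : 0 < b) (hx : 0 < x)
    (hxb : x ^ (β - 1) ≤ b ^ β) :
    max b x ^ β / ((1 - β) * x ^ (β - 1)) ≤ max 1 (b ^ (1 / (1 - β))) ^ β / (1 - β) * x := by
  have hβ : 0 < 1 - β := sub_pos.2 hβ1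
  have hmax : max b x ≤ max 1 (b ^ (1 / (1 - β))) * x := by
    rw [max_mul_of_nonneg _ _ hx.le, one_mul, max_comm]
    exact max_le_max_left x (le_rpow_mul_of_rpow_sub_one_le hb hx hβ1 hxb)
  calc max b x ^ β / ((1 - β) * x ^ (β - 1))
      ≤ (max 1 (b ^ (1 / (1 - β))) * x) ^ β / ((1 - β) * x ^ (β - 1)) := by gcongr
    _ = max 1 (b ^ (1 / (1 - β))) ^ β / (1 - β) * x := by
      rw [Real.mul_rpow (by positivity) hx.le, Real.rpow_sub_one hx.ne']
      field_simp

theorem sum_of_products_bound_polynomial_step_sizes_general {c : ℝ} (hβ0 : 0 ≤ β) (hβ1 : β < 1)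
    (hb : 0 < b) (hc : 0 < c) (hcb : c ≤ b ^ β) (K : ℕ) :
    ∑ k ∈ Icc 1 K, ∏ i ∈ range k, (1 - c * ((i : ℝ) + b) ^ (-β)) ≤
      max 1 (b ^ (1 / (1 - β))) ^ β / (1 - β) * c ^ (-1 / (1 - β)) := by
  obtain ⟨x, hx⟩ : ∃ x, x = c ^ (-1 / (1 - β)) := ⟨_, rfl⟩
  have hx0 : 0 < x := hx ▸ Real.rpow_pos_of_pos hc _
  have hcx : c = x ^ (β - 1) := by
    have hexp : -1 / (1 - β) = (β - 1)⁻¹ := by rw [← neg_sub β 1, neg_div_neg_eq, one_div]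
    rw [hx, hexp, Real.rpow_inv_rpow hc.le (sub_neg.2 hβ1).ne]
  rw [← hx]
  subst hcx
  calc ∑ k ∈ Icc 1 K, ∏ i ∈ range k, (1 - x ^ (β - 1) * ((i : ℝ) + b) ^ (-β))
      ≤ ∑ k ∈ range (K + 1), ∏ i ∈ range k, (1 - x ^ (β - 1) * ((i : ℝ) + b) ^ (-β)) := by
        rw [sum_range_eq_add_Ico _ K.add_one_pos, Ico_add_one_right_eq_Icc, prod_range_zero]
        exact le_add_of_nonneg_left zero_le_one
    _ ≤ max b x ^ β / ((1 - β) * x ^ (β - 1)) :=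
      sum_prod_one_sub_mul_rpow_neg_le hβ0 hβ1 hb hx0 hcb (K + 1)
    _ ≤ max 1 (b ^ (1 / (1 - β))) ^ β / (1 - β) * x := max_rpow_div_le hβ0 hβ1 hb hx0 hcb

end SumOfProducts

/-- Sum of products bound for polynomial step sizes (first bound of Lemma 4). -/
theorem sum_of_products_bound_polynomial_step_sizes
    (β b : ℝ) (hβ0 : 0 < β) (hβ1 : β < 1) (hb : 0 < b) :
    ∃ C : ℝ, 0 < C ∧
      ∀ c : ℝ, 0 < c → c ≤ min 1 (b ^ β) →
        ∀ K : ℕ, 1 ≤ K →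
          ∑ k ∈ Finset.Icc 1 K, ∏ i ∈ Finset.range k, (1 - c * ((i : ℝ) + b) ^ (-β)) ≤
            C * c ^ (-1 / (1 - β)) := by
  refine ⟨max 1 (b ^ (1 / (1 - β))) ^ β / (1 - β), div_pos (by positivity) (sub_pos.2 hβ1),
    fun _ hc hcb K _ ↦ ?_⟩
  exact sum_of_products_bound_polynomial_step_sizes_general hβ0.le hβ1 hb hc (le_min_iff.1 hcb).2 K
end

section
/- Double-sum exponential bound for polynomial step sizes (unnamed lemma following Lemma 4). Let α, b > 0, β ∈ (0,1), and set α_k := α(k+b)^{−β}. There exists a constant C > 0 depending only on α, b, and β such that for every c ∈ (0,1] and all integers 1 ≤ i < K: ∑_{t=i+1}^{K} ∑_{k=i}^{t-1} c·α_k · exp(−c ∑_{j=i+1}^{t-2} α_j) ≤ C·( c^{−1/(1−β)} + (i−1)^β / c ), where sums over empty index ranges equal 0. -/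
open Finset

/-!
Write `a k` for the step sizes and `S` for the sum of `c * a k` over `i ≤ k ≤ t - 1`. The exponent
in the `t`-th term omits only the two end steps of this window, so that term is at most
`exp (2 * a 1) * S * exp (-S) ≤ 2 * exp (2 * a 1) * exp (-S / 2)`. With `n = t - 1 - i`, the steps
of the window are of order at least `max i n ^ (-β)`, so `S` is at least a constant times
`c * min (n * i ^ (-β)) (n ^ (1 - β))`. Comparison with Gamma integrals gives
`∑ n, exp (-s * n ^ p) ≤ 1 + O(s ^ (-1 / p))`; the exponent `p = 1`, with `s` of order
`c * i ^ (-β)`, yields the term `i ^ β / c`, and `p = 1 - β`, with `s` of order `c`, yields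
`c ^ (-1 / (1 - β))`.
-/

lemma sum_range_exp_neg_mul_rpow_le {p s : ℝ} (hp : 0 < p) (hs : 0 < s) (m : ℕ) :
    ∑ n ∈ range m, Real.exp (-s * (n : ℝ) ^ p) ≤ 1 + s ^ (-1 / p) * Real.Gamma (1 / p + 1) := by
  set f : ℝ → ℝ := fun x => Real.exp (-s * x ^ p)
  have anti : AntitoneOn f (Set.Ici 0) := fun x hx y _ hxy =>
    Real.exp_le_exp.2 <| mul_le_mul_of_nonpos_left (Real.rpow_le_rpow hx hxy hp.le) (by linarith)
  have nonneg : ∀ x, 0 ≤ f x := fun x => (Real.exp_pos _).le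
  have integrable : MeasureTheory.IntegrableOn f (Set.Ioi 0) := by
    simpa [f] using integrableOn_rpow_mul_exp_neg_mul_rpow neg_one_lt_zero hp hs
  have summable : Summable fun n : ℕ => f n :=
    anti.summable_of_integrableOn_Ioi_zero integrable fun x _ => nonneg x
  calc ∑ n ∈ range m, f n ≤ ∑' n : ℕ, f n := summable.sum_le_tsum _ fun n _ => nonneg n
    _ ≤ f 0 + ∫ x in Set.Ioi 0, f x := anti.tsum_le_integral integrable fun x _ => nonneg x
    _ = 1 + s ^ (-1 / p) * Real.Gamma (1 / p + 1) := by
      rw [integral_exp_neg_mul_rpow hp hs]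
      simp [f, Real.zero_rpow hp.ne']

lemma sum_range_exp_neg_mul_min_le {β s x : ℝ} (hβ : β < 1) (hs : 0 < s) (hx : 0 < x) (m : ℕ) :
    ∑ n ∈ range m, Real.exp (-s * min (n * x ^ (-β)) ((n : ℝ) ^ (1 - β))) ≤
      2 + x ^ β / s + s ^ (-1 / (1 - β)) * Real.Gamma (1 / (1 - β) + 1) := by
  have exp_min_le (u v : ℝ) : Real.exp (-s * min u v) ≤ Real.exp (-s * u) + Real.exp (-s * v) := by
    rcases min_choice u v with h | h <;> rw [h] <;>
      linarith [Real.exp_pos (-s * u), Real.exp_pos (-s * v)]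
  have linear_part : ∑ n ∈ range m, Real.exp (-s * (n * x ^ (-β))) ≤ 1 + x ^ β / s := by
    have h := sum_range_exp_neg_mul_rpow_le one_pos (by positivity : 0 < s * x ^ (-β)) m
    have rate_inv : (s * x ^ (-β))⁻¹ = x ^ β / s := by
      rw [Real.rpow_neg hx.le, mul_inv, inv_inv, div_eq_inv_mul]
    simpa only [neg_mul, mul_assoc, mul_comm (x ^ (-β)), Real.rpow_one, div_one, Real.rpow_neg_one,
      rate_inv, one_add_one_eq_two, Real.Gamma_two, mul_one] using h
  have power_part := sum_range_exp_neg_mul_rpow_le (sub_pos.2 hβ) hs m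
  calc _ ≤ ∑ n ∈ range m, (Real.exp (-s * (n * x ^ (-β))) + Real.exp (-s * (n : ℝ) ^ (1 - β))) :=
        sum_le_sum fun n _ => exp_min_le _ _
    _ ≤ _ := by
      rw [sum_add_distrib]
      linarith

lemma sum_Icc_le_sum_Icc_interior_add {M : Type*} [AddCommMonoid M] [PartialOrder M]
    [IsOrderedAddMonoid M] {a : ℕ → M} {i m : ℕ} (him : i ≤ m) (ham : 0 ≤ a m) :
    ∑ k ∈ Icc i m, a k ≤ ∑ k ∈ Icc (i + 1) (m - 1), a k + (a i + a m) := by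
  rcases him.eq_or_lt with rfl | hlt
  · simpa using le_add_of_nonneg_right ham
  · have split : Icc i m = insert i (insert m (Icc (i + 1) (m - 1))) := by
      ext k
      simp only [mem_Icc, mem_insert]
      omega
    rw [split, sum_insert (by grind), sum_insert (by grind)]
    exact le_of_eq (by abel)

lemma mul_exp_neg_le_two_mul_exp_neg_half (x : ℝ) :
    x * Real.exp (-x) ≤ 2 * Real.exp (-(x / 2)) := by
  have hx : x ≤ 2 * Real.exp (x / 2) := by linarith [Real.add_one_le_exp (x / 2)]
  calc x * Real.exp (-x) ≤ 2 * Real.exp (x / 2) * Real.exp (-x) := by gcongr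
    _ = 2 * Real.exp (-(x / 2)) := by
      rw [mul_assoc, ← Real.exp_add]
      ring_nf

lemma sum_mul_exp_neg_sum_interior_le {a : ℕ → ℝ} {A c : ℝ} {i m : ℕ} (hc₀ : 0 ≤ c) (hc₁ : c ≤ 1)
    (him : i ≤ m) (ha₀ : ∀ k ∈ Icc i m, 0 ≤ a k) (haA : ∀ k ∈ Icc i m, a k ≤ A) :
    ∑ k ∈ Icc i m, c * a k * Real.exp (-(c * ∑ j ∈ Icc (i + 1) (m - 1), a j)) ≤
      2 * Real.exp (2 * A) * Real.exp (-(c / 2 * ∑ k ∈ Icc i m, a k)) := by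
  set S := c * ∑ k ∈ Icc i m, a k with hS
  set S' := c * ∑ j ∈ Icc (i + 1) (m - 1), a j
  have hi : i ∈ Icc i m := left_mem_Icc.2 him
  have hm : m ∈ Icc i m := right_mem_Icc.2 him
  have S_nonneg : 0 ≤ S := mul_nonneg hc₀ (sum_nonneg ha₀)
  have S_le : S ≤ S' + 2 * A := by
    calc S ≤ c * (∑ k ∈ Icc (i + 1) (m - 1), a k + (a i + a m)) := by
          rw [hS]
          gcongr
          exact sum_Icc_le_sum_Icc_interior_add him (ha₀ m hm)
      _ = S' + c * (a i + a m) := mul_add _ _ _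
      _ ≤ S' + 2 * A := by
        have := mul_le_of_le_one_left (add_nonneg (ha₀ i hi) (ha₀ m hm)) hc₁
        linarith [haA i hi, haA m hm]
  calc ∑ k ∈ Icc i m, c * a k * Real.exp (-S') = S * Real.exp (-S') := by
        rw [← sum_mul, ← mul_sum]
    _ ≤ S * Real.exp (2 * A + -S) := by
      gcongr
      linarith
    _ = Real.exp (2 * A) * (S * Real.exp (-S)) := by
      rw [Real.exp_add]
      ring
    _ ≤ Real.exp (2 * A) * (2 * Real.exp (-(S / 2))) :=
      mul_le_mul_of_nonneg_left (mul_exp_neg_le_two_mul_exp_neg_half S) (Real.exp_pos _).le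
    _ = 2 * Real.exp (2 * A) * Real.exp (-(c / 2 * ∑ k ∈ Icc i m, a k)) := by
      rw [hS]
      ring_nf

/-- The polynomial step size `α_k = α (k + b) ^ (-β)`, meaningful only when `0 < k + b`. -/
noncomputable def polyStepSize (α b β : ℝ) (k : ℕ) : ℝ :=
  α * ((k : ℝ) + b) ^ (-β)

section polyStepSize

variable {α b β : ℝ}

lemma polyStepSize_nonneg (hα : 0 ≤ α) {k : ℕ} (hk : 0 ≤ k + b) : 0 ≤ polyStepSize α b β k :=
  mul_nonneg hα (Real.rpow_nonneg hk _)

lemma polyStepSize_le_polyStepSize (hα : 0 ≤ α) (hβ : 0 ≤ β) {k l : ℕ} (hk : 0 < k + b)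
    (hkl : k ≤ l) : polyStepSize α b β l ≤ polyStepSize α b β k := by
  have : (k : ℝ) ≤ l := by exact_mod_cast hkl
  exact mul_le_mul_of_nonneg_left
    (Real.rpow_le_rpow_of_nonpos hk (by linarith) (by linarith)) hα

lemma mul_rpow_neg_le_polyStepSize (hα : 0 ≤ α) (hβ : 0 ≤ β) {k : ℕ} {x : ℝ} (hk : 0 < k + b)
    (hx : 1 ≤ x) (hkx : k ≤ 2 * x) :
    α * (2 + |b|) ^ (-β) * x ^ (-β) ≤ polyStepSize α b β k := by
  have shift_le : k + b ≤ (2 + |b|) * x := by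
    nlinarith [le_abs_self b, abs_nonneg b]
  rw [mul_assoc, ← Real.mul_rpow (by positivity) (by positivity)]
  exact mul_le_mul_of_nonneg_left
    (Real.rpow_le_rpow_of_nonpos hk shift_le (by linarith)) hα

lemma mul_polyStepSize_le_sum (hα : 0 ≤ α) (hβ : 0 ≤ β) {i : ℕ} (hi : 0 < i + b) (n : ℕ) :
    n * polyStepSize α b β (i + n) ≤ ∑ k ∈ Icc i (i + n), polyStepSize α b β k := by
  have pos_of_le {k : ℕ} (hik : i ≤ k) : 0 < k + b := by
    have : (i : ℝ) ≤ k := by exact_mod_cast hik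
    linarith
  have last_le : ∀ k ∈ Icc i (i + n), polyStepSize α b β (i + n) ≤ polyStepSize α b β k := by
    intro k hk
    obtain ⟨hik, hkn⟩ := mem_Icc.1 hk
    exact polyStepSize_le_polyStepSize hα hβ (pos_of_le hik) hkn
  calc n * polyStepSize α b β (i + n) ≤ #(Icc i (i + n)) • polyStepSize α b β (i + n) := by
        rw [nsmul_eq_mul, Nat.card_Icc]
        refine mul_le_mul_of_nonneg_right ?_ (polyStepSize_nonneg hα (pos_of_le (by omega)).le)
        exact_mod_cast (by omega : n ≤ i + n + 1 - i)
    _ ≤ ∑ k ∈ Icc i (i + n), polyStepSize α b β k := card_nsmul_le_sum _ _ _ last_le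

lemma mul_min_le_sum_polyStepSize (hα : 0 ≤ α) (hβ : 0 ≤ β) {i : ℕ} (hi : 1 ≤ i)
    (hib : 0 < i + b) (n : ℕ) :
    α * (2 + |b|) ^ (-β) * min (n * (i : ℝ) ^ (-β)) ((n : ℝ) ^ (1 - β)) ≤
      ∑ k ∈ Icc i (i + n), polyStepSize α b β k := by
  have hi' : (1 : ℝ) ≤ i := by exact_mod_cast hi
  have min_le : min (n * (i : ℝ) ^ (-β)) ((n : ℝ) ^ (1 - β)) ≤ n * (max i n : ℝ) ^ (-β) := by
    rcases le_total (n : ℝ) i with hni | hin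
    · rw [max_eq_left hni]
      exact min_le_left _ _
    · have pow_eq : (n : ℝ) ^ (1 - β) = n * (n : ℝ) ^ (-β) := by
        rw [sub_eq_add_neg, Real.rpow_add (by linarith), Real.rpow_one]
      rw [max_eq_right hin, ← pow_eq]
      exact min_le_right _ _
  have last_ge : α * (2 + |b|) ^ (-β) * (max i n : ℝ) ^ (-β) ≤ polyStepSize α b β (i + n) := by
    refine mul_rpow_neg_le_polyStepSize hα hβ ?_ (le_max_of_le_left hi') ?_ <;> push_cast
    · linarith [n.cast_nonneg (α := ℝ)]
    · linarith [le_max_left (i : ℝ) n, le_max_right (i : ℝ) n]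
  calc _ ≤ α * (2 + |b|) ^ (-β) * (n * (max i n : ℝ) ^ (-β)) := by gcongr
    _ = n * (α * (2 + |b|) ^ (-β) * (max i n : ℝ) ^ (-β)) := by ring
    _ ≤ n * polyStepSize α b β (i + n) := by gcongr
    _ ≤ _ := mul_polyStepSize_le_sum hα hβ hib n

lemma sum_exp_neg_mul_sum_polyStepSize_le (hα : 0 < α) (hβ₀ : 0 ≤ β) (hβ₁ : β < 1) {s : ℝ}
    (hs : 0 < s) {i : ℕ} (hi : 1 ≤ i) (hib : 0 < i + b) (K : ℕ) :
    ∑ t ∈ Icc (i + 1) K, Real.exp (-(s * ∑ k ∈ Icc i (t - 1), polyStepSize α b β k)) ≤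
      2 + (i : ℝ) ^ β / (s * (α * (2 + |b|) ^ (-β))) +
        (s * (α * (2 + |b|) ^ (-β))) ^ (-1 / (1 - β)) * Real.Gamma (1 / (1 - β) + 1) := by
  have hD : 0 < α * (2 + |b|) ^ (-β) := by positivity
  have hi' : (0 : ℝ) < i := by exact_mod_cast hi
  refine le_trans ?_ (sum_range_exp_neg_mul_min_le hβ₁ (mul_pos hs hD) hi' (K + 1 - (i + 1)))
  rw [← Ico_add_one_right_eq_Icc, sum_Ico_eq_sum_range]
  refine sum_le_sum fun n _ => Real.exp_le_exp.2 ?_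
  rw [show i + 1 + n - 1 = i + n by omega, neg_mul, mul_assoc]
  gcongr
  exact mul_min_le_sum_polyStepSize hα.le hβ₀ hi hib n

end polyStepSize

lemma two_add_rpow_div_add_rpow_mul_le {β κ c x G : ℝ} (hβ₀ : 0 ≤ β) (hβ₁ : β < 1) (hκ : 0 < κ)
    (hc₀ : 0 < c) (hc₁ : c ≤ 1) (hx : 1 ≤ x) (hG : 0 ≤ G) :
    2 + x ^ β / (c * κ) + (c * κ) ^ (-1 / (1 - β)) * G ≤
      (2 + 1 / κ + κ ^ (-1 / (1 - β)) * G) * (c ^ (-1 / (1 - β)) + (x - 1) ^ β / c) := by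
  set X := c ^ (-1 / (1 - β))
  set Y := (x - 1) ^ β / c
  have inv_le_X : 1 / c ≤ X := by
    rw [one_div, ← Real.rpow_neg_one]
    refine Real.rpow_le_rpow_of_exponent_ge hc₀ hc₁ ?_
    rw [div_le_iff₀ (sub_pos.2 hβ₁)]
    linarith
  have one_le_X : 1 ≤ X := (one_le_one_div hc₀ hc₁).trans inv_le_X
  have Y_nonneg : 0 ≤ Y := div_nonneg (Real.rpow_nonneg (sub_nonneg.2 hx) _) hc₀.le
  have rpow_le : x ^ β ≤ (x - 1) ^ β + 1 := by
    simpa using Real.rpow_add_le_add_rpow (sub_nonneg.2 hx) zero_le_one hβ₀ hβ₁.le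
  have constant_part : 2 ≤ 2 * (X + Y) := by linarith
  have linear_part : x ^ β / (c * κ) ≤ 1 / κ * (X + Y) := by
    calc x ^ β / (c * κ) ≤ ((x - 1) ^ β + 1) / (c * κ) := by gcongr
      _ = 1 / κ * (1 / c + Y) := by
        simp only [Y]
        field_simp
        ring
      _ ≤ 1 / κ * (X + Y) := by gcongr
  have power_part : (c * κ) ^ (-1 / (1 - β)) * G ≤ κ ^ (-1 / (1 - β)) * G * (X + Y) := by
    calc (c * κ) ^ (-1 / (1 - β)) * G = κ ^ (-1 / (1 - β)) * G * X := by
          rw [Real.mul_rpow hc₀.le hκ.le]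
          ring
      _ ≤ κ ^ (-1 / (1 - β)) * G * (X + Y) := by
        gcongr
        linarith
  calc _ ≤ 2 * (X + Y) + 1 / κ * (X + Y) + κ ^ (-1 / (1 - β)) * G * (X + Y) :=
        add_le_add (add_le_add constant_part linear_part) power_part
    _ = _ := by ring

theorem double_sum_exponential_bound_polynomial_step_sizes_general
    {α b β : ℝ} (hα : 0 < α) (hb : -1 < b) (hβ₀ : 0 ≤ β) (hβ₁ : β < 1) :
    ∃ C : ℝ, 0 < C ∧ ∀ c : ℝ, 0 < c → c ≤ 1 → ∀ i K : ℕ, 1 ≤ i →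
      ∑ t ∈ Icc (i + 1) K, ∑ k ∈ Icc i (t - 1), c * polyStepSize α b β k *
          Real.exp (-(c * ∑ j ∈ Icc (i + 1) (t - 2), polyStepSize α b β j)) ≤
        C * (c ^ (-1 / (1 - β)) + ((i : ℝ) - 1) ^ β / c) := by
  have shift_pos {k : ℕ} (hk : 1 ≤ k) : 0 < k + b := by
    have : (1 : ℝ) ≤ k := by exact_mod_cast hk
    linarith
  set A := polyStepSize α b β 1
  set κ := α * (2 + |b|) ^ (-β) / 2
  set G := Real.Gamma (1 / (1 - β) + 1)
  have hκ : 0 < κ := by positivity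
  have hG : 0 < G := by
    have := sub_pos.2 hβ₁
    exact Real.Gamma_pos_of_pos (by positivity)
  refine ⟨2 * Real.exp (2 * A) * (2 + 1 / κ + κ ^ (-1 / (1 - β)) * G), by positivity, ?_⟩
  intro c hc₀ hc₁ i K hi
  have hi' : (1 : ℝ) ≤ i := by exact_mod_cast hi
  calc _ ≤ ∑ t ∈ Icc (i + 1) K, 2 * Real.exp (2 * A) *
          Real.exp (-(c / 2 * ∑ k ∈ Icc i (t - 1), polyStepSize α b β k)) := by
        refine sum_le_sum fun t ht => ?_
        have one_le {k : ℕ} (hk : k ∈ Icc i (t - 1)) : 1 ≤ k := hi.trans (mem_Icc.1 hk).1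
        exact sum_mul_exp_neg_sum_interior_le hc₀.le hc₁ (Nat.le_sub_one_of_lt (mem_Icc.1 ht).1)
          (fun k hk => polyStepSize_nonneg hα.le (shift_pos (one_le hk)).le)
          (fun k hk => polyStepSize_le_polyStepSize hα.le hβ₀ (shift_pos le_rfl) (one_le hk))
    _ ≤ 2 * Real.exp (2 * A) * (2 + (i : ℝ) ^ β / (c * κ) + (c * κ) ^ (-1 / (1 - β)) * G) := by
      rw [← mul_sum, show c * κ = c / 2 * (α * (2 + |b|) ^ (-β)) by ring]
      gcongr
      exact sum_exp_neg_mul_sum_polyStepSize_le hα hβ₀ hβ₁ (half_pos hc₀) hi (shift_pos hi) K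
    _ ≤ _ := by
      rw [mul_assoc (2 * Real.exp (2 * A)) (_ + _)]
      exact mul_le_mul_of_nonneg_left
        (two_add_rpow_div_add_rpow_mul_le hβ₀ hβ₁ hκ hc₀ hc₁ hi' hG.le) (by positivity)

/-- Double-sum exponential bound for polynomial step sizes
(unnamed lemma following Lemma 4). -/
theorem double_sum_exponential_bound_polynomial_step_sizes
    (α b β : ℝ) (hα : 0 < α) (hb : 0 < b) (hβ0 : 0 < β) (hβ1 : β < 1) :
    ∃ C : ℝ, 0 < C ∧
      ∀ c : ℝ, 0 < c → c ≤ 1 →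
        ∀ i K : ℕ, 1 ≤ i → i < K →
          ∑ t ∈ Finset.Icc (i + 1) K, ∑ k ∈ Finset.Icc i (t - 1),
              c * (α * ((k : ℝ) + b) ^ (-β)) *
                Real.exp (-(c * ∑ j ∈ Finset.Icc (i + 1) (t - 2),
                  α * ((j : ℝ) + b) ^ (-β))) ≤
            C * (c ^ (-1 / (1 - β)) + ((i : ℝ) - 1) ^ β / c) := by
  obtain ⟨C, hC, bound⟩ := double_sum_exponential_bound_polynomial_step_sizes_general
    hα (by linarith : -1 < b) hβ0.le hβ1
  exact ⟨C, hC, fun c hc₀ hc₁ i K hi _ => bound c hc₀ hc₁ i K hi⟩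
end

section
/- Pointwise bound on the deviation of Ψ_i^K from A^{-1} (equation (13) in the proof of Lemma 4). Let α, b > 0, β ∈ (0,1), and α_j := α(j+b)^{−β}. Let c ∈ (0,1] and let A be an invertible n×n real matrix such that ‖I − α_j A‖∞ ≤ 1 − cα_j for all j ≥ 0 and ‖A^{-1}‖∞ ≤ 1/c. Then there exists a constant C > 0 depending only on α, b, and β such that for all integers 1 ≤ i ≤ K: ‖Ψ_i^K − A^{-1}‖∞ ≤ C·( 1/(i·c^{(2−β)/(1−β)}) + (i−1)^β/(i·c²) + (1 − cα_K)^{K−i+1}/c ). -/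
open Finset

/-- The matrix product ∏_{j=a}^{b-1} (I - α_j A), taken over the index range [a, b)
(empty products equal the identity; all factors commute, so the order is immaterial). -/
noncomputable def prodIco {n : Type*} [Fintype n] [DecidableEq n]
    (A : Matrix n n ℝ) (α : ℕ → ℝ) (a b : ℕ) : Matrix n n ℝ :=
  ((List.range' a (b - a)).map (fun j => (1 : Matrix n n ℝ) - α j • A)).prod

/-- Ψ_i^K := α_i ∑_{k=i+1}^{K} ∏_{j=i+1}^{k-1} (I - α_j A). -/
noncomputable def Psi {n : Type*} [Fintype n] [DecidableEq n]
    (A : Matrix n n ℝ) (α : ℕ → ℝ) (i K : ℕ) : Matrix n n ℝ :=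
  α i • ∑ k ∈ Finset.Icc (i + 1) K, prodIco A α (i + 1) k

/-!
The sums `S_i = ∑_{k=i+1}^K ∏_{j=i+1}^{k-1} (1 - a_j A)` satisfy the backward recursion
`S_i = 1 + (1 - a_{i+1} A) S_{i+1}`, `S_K = 0`, and so the deviations `D_i = a_i S_i - A⁻¹` satisfy
`D_i = (a_i - a_{i+1}) S_i + (1 - a_{i+1} A) D_{i+1}`, `D_K = -A⁻¹`. Taking norms, it suffices to
find supersolutions of the two scalar recursions. With `x = i + b`, `γ = cα` and `X` chosen so
that `X ^ (β - 1) = γ / 2`, the function `V x = (2 / γ) (x + X) ^ β` dominates `‖S_i‖`, because its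
increments are at most `1`. As `a_i - a_{i+1} ≤ 2 a_{i+1} / (x + 1)`, the decreasing function
`2 V x / (c x)` then dominates the part of `‖D_i‖` driven by the step-size increments, while
`-A⁻¹` contributes the geometric term `(1 - c a_K) ^ (K - i) / c`.
-/

section BackwardRecursion

theorem le_of_backward_recursion {R : Type*} [Semiring R] [PartialOrder R] [IsOrderedRing R]
    {u g q W : ℕ → R} {m K : ℕ} (hq : ∀ i, 0 ≤ q i)
    (hu : ∀ i, m ≤ i → i < K → u i ≤ g i + q i * u (i + 1))
    (hW : ∀ i, m ≤ i → i < K → g i + q i * W (i + 1) ≤ W i) (hK : u K ≤ W K)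
    {i : ℕ} (hmi : m ≤ i) (hiK : i ≤ K) : u i ≤ W i := by
  induction hiK using Nat.decreasingInduction with
  | self => exact hK
  | of_succ k hkK ih =>
    calc u k ≤ g k + q k * u (k + 1) := hu k hmi hkK
      _ ≤ g k + q k * W (k + 1) := by gcongr; exacts [hq k, ih (by lia)]
      _ ≤ W k := hW k hmi hkK

/-- The sum `∑_{k=i+1}^K f (i+1) ⋯ f (k-1)`; for `f j = 1 - a j • A` it is the sum in the
definition of `Psi`, in an arbitrary semiring in place of matrices. -/
def sumProd {R : Type*} [Semiring R] (f : ℕ → R) (i K : ℕ) : R :=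
  ∑ k ∈ Icc (i + 1) K, ((List.range' (i + 1) (k - (i + 1))).map f).prod

theorem sumProd_self {R : Type*} [Semiring R] (f : ℕ → R) (K : ℕ) : sumProd f K K = 0 := by
  simp [sumProd]

theorem sumProd_eq_one_add_mul {R : Type*} [Semiring R] (f : ℕ → R) {i K : ℕ} (h : i < K) :
    sumProd f i K = 1 + f (i + 1) * sumProd f (i + 1) K := by
  unfold sumProd
  rw [← add_sum_Ioc_eq_sum_Icc (Nat.succ_le_of_lt h), mul_sum]
  congr 1
  · simp
  · refine sum_congr (by ext; simp) fun k hk => ?_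
    obtain ⟨m, rfl⟩ := Nat.exists_eq_add_of_le (mem_Icc.1 hk).1
    rw [show i + 1 + 1 + m - (i + 1) = m + 1 by lia, Nat.add_sub_cancel_left, List.range'_succ,
      List.map_cons, List.prod_cons]

theorem smul_sumProd_sub_eq {𝕜 R : Type*} [CommRing 𝕜] [Ring R] [Algebra 𝕜 R] {A B : R}
    (hAB : A * B = 1) (a : ℕ → 𝕜) {i K : ℕ} (h : i < K) :
    a i • sumProd (fun j => 1 - a j • A) i K - B =
      (a i - a (i + 1)) • sumProd (fun j => 1 - a j • A) i K +
        (1 - a (i + 1) • A) * (a (i + 1) • sumProd (fun j => 1 - a j • A) (i + 1) K - B) := by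
  have hrec := congrArg (a (i + 1) • ·) (sumProd_eq_one_add_mul (fun j => 1 - a j • A) h)
  simp only [smul_add, ← mul_smul_comm] at hrec
  rw [sub_smul, mul_sub, hrec, sub_mul 1 (a (i + 1) • A) B, smul_mul_assoc, hAB, one_mul]
  abel

variable {R : Type*} [SeminormedRing R]

theorem norm_sumProd_le [NormOneClass R] {f : ℕ → R} {q V : ℕ → ℝ} {K : ℕ}
    (hf : ∀ j, ‖f j‖ ≤ q j) (hV : ∀ i < K, 1 + q (i + 1) * V (i + 1) ≤ V i) (hVK : 0 ≤ V K)
    {i : ℕ} (hiK : i ≤ K) : ‖sumProd f i K‖ ≤ V i := by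
  have hq (j : ℕ) : 0 ≤ q (j + 1) := (norm_nonneg _).trans (hf _)
  refine le_of_backward_recursion (u := fun i => ‖sumProd f i K‖) hq (fun k _ hk => ?_)
    (fun k _ hk => hV k hk) (by simpa only [sumProd_self, norm_zero] using hVK)
    (Nat.zero_le i) hiK
  calc ‖sumProd f k K‖ = ‖1 + f (k + 1) * sumProd f (k + 1) K‖ := by
        rw [sumProd_eq_one_add_mul f hk]
    _ ≤ ‖(1 : R)‖ + ‖f (k + 1)‖ * ‖sumProd f (k + 1) K‖ :=
        (norm_add_le _ _).trans (by gcongr; exact norm_mul_le _ _)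
    _ ≤ 1 + q (k + 1) * ‖sumProd f (k + 1) K‖ := by rw [norm_one]; gcongr; exact hf _

theorem norm_smul_sumProd_sub_le [NormedAlgebra ℝ R] {A B : R} {a V U : ℕ → ℝ} {c : ℝ} {m K : ℕ}
    (hAB : A * B = 1) (hc : 0 ≤ c) (ha : Antitone a) (hA : ∀ j, ‖1 - a j • A‖ ≤ 1 - c * a j)
    (hV : ∀ i, m ≤ i → i ≤ K → ‖sumProd (fun j => 1 - a j • A) i K‖ ≤ V i)
    (hU : ∀ i, m ≤ i → i < K →
      (a i - a (i + 1)) * V i + (1 - c * a (i + 1)) * U (i + 1) ≤ U i)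
    (hUK : 0 ≤ U K) {i : ℕ} (hmi : m ≤ i) (hiK : i ≤ K) :
    ‖a i • sumProd (fun j => 1 - a j • A) i K - B‖ ≤ U i + (1 - c * a K) ^ (K - i) * ‖B‖ := by
  have hq (j : ℕ) : 0 ≤ 1 - c * a j := (norm_nonneg _).trans (hA j)
  refine le_of_backward_recursion (m := m) (q := fun i => 1 - c * a (i + 1))
    (u := fun i => ‖a i • sumProd (fun j => 1 - a j • A) i K - B‖)
    (W := fun i => U i + (1 - c * a K) ^ (K - i) * ‖B‖)
    (g := fun i => (a i - a (i + 1)) * V i) (fun i => hq (i + 1)) (fun k hmk hkK => ?_)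
    (fun k hmk hkK => ?_) (by simpa [sumProd_self] using hUK) hmi hiK
  · have hdecr : 0 ≤ a k - a (k + 1) := sub_nonneg.2 (ha k.le_succ)
    rw [smul_sumProd_sub_eq hAB a hkK]
    refine (norm_add_le _ _).trans (add_le_add ?_ ((norm_mul_le _ _).trans ?_))
    · rw [norm_smul, Real.norm_of_nonneg hdecr]
      exact mul_le_mul_of_nonneg_left (hV k hmk hkK.le) hdecr
    · exact mul_le_mul_of_nonneg_right (hA _) (norm_nonneg _)
  · have hgeom : (1 - c * a (k + 1)) * ((1 - c * a K) ^ (K - (k + 1)) * ‖B‖)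
        ≤ (1 - c * a K) ^ (K - k) * ‖B‖ := by
      rw [show K - k = K - (k + 1) + 1 by lia, pow_succ', mul_assoc]
      have haK : a K ≤ a (k + 1) := ha hkK
      have := hq K
      gcongr
    linarith [hU k hmk hkK]

end BackwardRecursion

section RealPowers

variable {x X β : ℝ}

theorem add_one_rpow_sub_rpow_le (hx : 0 < x) (hβ : β ≤ 1) :
    (x + 1) ^ β - x ^ β ≤ (x + 1) ^ (β - 1) := by
  have hdecr : (x + 1) ^ (β - 1) ≤ x ^ (β - 1) :=
    Real.rpow_le_rpow_of_nonpos hx (by linarith) (by linarith)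
  have hpow {z : ℝ} (hz : 0 < z) : z ^ β = z ^ (β - 1) * z := by
    rw [← Real.rpow_add_one hz.ne', sub_add_cancel]
  rw [hpow hx, hpow (by linarith : 0 < x + 1)]
  linarith [mul_le_mul_of_nonneg_right hdecr hx.le]

theorem rpow_neg_sub_add_one_rpow_neg_le (hx : 0 < x) (hβ : β ≤ 1) :
    x ^ (-β) - (x + 1) ^ (-β) ≤ (x + 1) ^ (-β) / x := by
  have hincr : x ^ (-β + 1) ≤ (x + 1) ^ (-β + 1) :=
    Real.rpow_le_rpow hx.le (by linarith) (by linarith)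
  rw [Real.rpow_add_one hx.ne', Real.rpow_add_one (by linarith : x + 1 ≠ 0)] at hincr
  rw [le_div_iff₀ hx]
  linarith

theorem antitoneOn_add_rpow_div (hX : 0 ≤ X) (hβ : β ≤ 1) :
    AntitoneOn (fun y : ℝ => (y + X) ^ β / y) (Set.Ioi 0) := by
  have hfactor {y : ℝ} (hy : 0 < y) : (y + X) ^ β / y = (y + X) ^ (β - 1) * (1 + X / y) := by
    rw [Real.rpow_sub_one (by positivity)]
    field_simp
  intro y hy z hz hyz
  simp only [Set.mem_Ioi] at hy hz
  have hpow : (z + X) ^ (β - 1) ≤ (y + X) ^ (β - 1) :=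
    Real.rpow_le_rpow_of_nonpos (by positivity) (by linarith) (by linarith)
  simp only [hfactor hy, hfactor hz]
  gcongr

theorem add_rpow_le_sub_one_rpow_add {y b : ℝ} (hy : 1 ≤ y) (hb : 0 ≤ b) (hβ0 : 0 ≤ β)
    (hβ1 : β ≤ 1) : (y + b) ^ β ≤ (y - 1) ^ β + (1 + b) :=
  calc (y + b) ^ β = (y - 1 + (1 + b)) ^ β := by ring_nf
    _ ≤ (y - 1) ^ β + (1 + b) ^ β :=
        Real.rpow_add_le_add_rpow (by linarith) (by linarith) hβ0 hβ1
    _ ≤ (y - 1) ^ β + (1 + b) := by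
        gcongr
        exact Real.rpow_le_self_of_one_le (by linarith) hβ1

end RealPowers

section Majorants

/-- The solution `X` of `X ^ (β - 1) = γ / 2`: the scale beyond which the increments of
`y ↦ y ^ β` are at most `γ / 2`. -/
noncomputable def crossoverScale (γ β : ℝ) : ℝ := (2 / γ) ^ (1 / (1 - β))

/-- A supersolution of the recursion `v (y - 1) = 1 + (1 - γ y ^ (-β)) v y` obeyed by the norms of
the sums `sumProd`, as a function of `y = i + b`. -/
noncomputable def sumMajorant (γ β y : ℝ) : ℝ := 2 / γ * (y + crossoverScale γ β) ^ β

/-- A supersolution of the recursion obeyed by the part of `‖Ψ_i^K - A⁻¹‖` that is due to the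
variation of the step sizes, as a function of `y = i + b`. -/
noncomputable def deviationMajorant (α c β y : ℝ) : ℝ := 2 * sumMajorant (c * α) β y / (c * y)

variable {α β γ c x y : ℝ}

theorem crossoverScale_pos (hγ : 0 < γ) : 0 < crossoverScale γ β := by
  unfold crossoverScale; positivity

theorem crossoverScale_rpow_sub_one (hγ : 0 < γ) (hβ : β < 1) :
    crossoverScale γ β ^ (β - 1) = γ / 2 := by
  have hβ' : 1 - β ≠ 0 := by linarith
  rw [crossoverScale, ← Real.rpow_mul (by positivity),
    show 1 / (1 - β) * (β - 1) = -1 by field_simp; ring, Real.rpow_neg_one, inv_div]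

theorem crossoverScale_mul_div (hα : 0 < α) (hc : 0 < c) (hβ : β < 1) :
    crossoverScale (c * α) β / c = crossoverScale α β / c ^ ((2 - β) / (1 - β)) := by
  have hβ' : 1 - β ≠ 0 := by linarith
  rw [crossoverScale, crossoverScale, show 2 / (c * α) = 2 / α / c by field_simp,
    Real.div_rpow (by positivity) hc.le,
    show (2 - β) / (1 - β) = 1 / (1 - β) + 1 by field_simp; ring, Real.rpow_add_one hc.ne',
    div_div]

theorem sumMajorant_nonneg (hγ : 0 < γ) (hy : 0 ≤ y) : 0 ≤ sumMajorant γ β y := by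
  have := crossoverScale_pos (β := β) hγ
  unfold sumMajorant; positivity

theorem sumMajorant_mono (hγ : 0 < γ) (hβ : 0 ≤ β) (hx : 0 ≤ x) (hxy : x ≤ y) :
    sumMajorant γ β x ≤ sumMajorant γ β y := by
  have := crossoverScale_pos (β := β) hγ
  unfold sumMajorant; gcongr

theorem sumMajorant_supersolution (hγ : 0 < γ) (hβ0 : 0 ≤ β) (hβ1 : β < 1) (hx : 0 ≤ x) :
    1 + (1 - γ * (x + 1) ^ (-β)) * sumMajorant γ β (x + 1) ≤ sumMajorant γ β x := by
  have hX := crossoverScale_pos (β := β) hγ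
  have hincr : sumMajorant γ β (x + 1) - sumMajorant γ β x ≤ 1 :=
    calc sumMajorant γ β (x + 1) - sumMajorant γ β x
        = 2 / γ * ((x + crossoverScale γ β + 1) ^ β - (x + crossoverScale γ β) ^ β) := by
          rw [sumMajorant, sumMajorant, add_right_comm, mul_sub]
      _ ≤ 2 / γ * crossoverScale γ β ^ (β - 1) := by
          gcongr
          exact (add_one_rpow_sub_rpow_le (by positivity) hβ1.le).trans
            (Real.rpow_le_rpow_of_nonpos hX (by linarith) (by linarith))
      _ = 1 := by rw [crossoverScale_rpow_sub_one hγ hβ1]; field_simp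
  have hdamp : 2 ≤ γ * (x + 1) ^ (-β) * sumMajorant γ β (x + 1) :=
    calc 2 = γ * (x + 1) ^ (-β) * (2 / γ * (x + 1) ^ β) := by
          rw [Real.rpow_neg (by positivity)]; field_simp
      _ ≤ γ * (x + 1) ^ (-β) * sumMajorant γ β (x + 1) := by
          unfold sumMajorant
          gcongr _ * (_ * ?_)
          exact Real.rpow_le_rpow (by positivity) (by linarith) hβ0
  linarith

theorem sumMajorant_le (hγ : 0 < γ) (hβ0 : 0 ≤ β) (hβ1 : β < 1) (hy : 0 ≤ y) :
    sumMajorant γ β y ≤ 2 / γ * y ^ β + crossoverScale γ β := by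
  have hX := crossoverScale_pos (β := β) hγ
  have hXβ : crossoverScale γ β ^ β = γ / 2 * crossoverScale γ β := by
    rw [← crossoverScale_rpow_sub_one hγ hβ1, ← Real.rpow_add_one hX.ne', sub_add_cancel]
  calc sumMajorant γ β y ≤ 2 / γ * (y ^ β + crossoverScale γ β ^ β) := by
        unfold sumMajorant
        gcongr
        exact Real.rpow_add_le_add_rpow hy hX.le hβ0 hβ1.le
    _ = 2 / γ * y ^ β + crossoverScale γ β := by rw [hXβ]; field_simp

theorem deviationMajorant_nonneg (hα : 0 < α) (hc : 0 < c) (hy : 0 ≤ y) :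
    0 ≤ deviationMajorant α c β y := by
  have := sumMajorant_nonneg (β := β) (mul_pos hc hα) hy
  unfold deviationMajorant; positivity

theorem deviationMajorant_antitoneOn (hα : 0 < α) (hc : 0 < c) (hβ : β ≤ 1) :
    AntitoneOn (deviationMajorant α c β) (Set.Ioi 0) := by
  have hX := crossoverScale_pos (β := β) (mul_pos hc hα)
  have heq : deviationMajorant α c β =
      fun y => 2 * (2 / (c * α)) / c * ((y + crossoverScale (c * α) β) ^ β / y) := by
    ext y
    rw [deviationMajorant, sumMajorant]
    ring
  rw [heq]
  intro y hy z hz hyz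
  exact mul_le_mul_of_nonneg_left (antitoneOn_add_rpow_div hX.le hβ hy hz hyz) (by positivity)

theorem deviationMajorant_supersolution (hα : 0 < α) (hc : 0 < c) (hβ0 : 0 ≤ β) (hβ1 : β ≤ 1)
    (hx : 1 ≤ x) :
    (α * x ^ (-β) - α * (x + 1) ^ (-β)) * sumMajorant (c * α) β x +
        (1 - c * (α * (x + 1) ^ (-β))) * deviationMajorant α c β (x + 1) ≤
      deviationMajorant α c β x := by
  have hγ : 0 < c * α := mul_pos hc hα
  have hx0 : 0 < x := by linarith
  have hV := sumMajorant_nonneg (β := β) hγ hx0.le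
  have hstep : x ^ (-β) - (x + 1) ^ (-β) ≤ (x + 1) ^ (-β) * (2 / (x + 1)) :=
    calc x ^ (-β) - (x + 1) ^ (-β) ≤ (x + 1) ^ (-β) / x :=
          rpow_neg_sub_add_one_rpow_neg_le hx0 hβ1
      _ = (x + 1) ^ (-β) * (1 / x) := by ring
      _ ≤ (x + 1) ^ (-β) * (2 / (x + 1)) := by
          gcongr _ * ?_
          rw [div_le_div_iff₀ hx0 (by positivity)]
          linarith
  have hdrive : (α * x ^ (-β) - α * (x + 1) ^ (-β)) * sumMajorant (c * α) β x ≤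
      c * (α * (x + 1) ^ (-β)) * deviationMajorant α c β (x + 1) :=
    calc (α * x ^ (-β) - α * (x + 1) ^ (-β)) * sumMajorant (c * α) β x
        = α * (x ^ (-β) - (x + 1) ^ (-β)) * sumMajorant (c * α) β x := by ring
      _ ≤ α * ((x + 1) ^ (-β) * (2 / (x + 1))) * sumMajorant (c * α) β (x + 1) := by
          gcongr
          exact sumMajorant_mono hγ hβ0 hx0.le (by linarith)
      _ = c * (α * (x + 1) ^ (-β)) * deviationMajorant α c β (x + 1) := by
          unfold deviationMajorant; field_simp
  have hanti : deviationMajorant α c β (x + 1) ≤ deviationMajorant α c β x :=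
    deviationMajorant_antitoneOn hα hc hβ1 hx0 (by simp only [Set.mem_Ioi]; linarith)
      (by linarith)
  linarith

theorem rpow_two_sub_div_one_sub_le_sq (hc : 0 < c) (hc1 : c ≤ 1) (hβ0 : 0 ≤ β) (hβ1 : β < 1) :
    c ^ ((2 - β) / (1 - β)) ≤ c ^ 2 := by
  rw [← Real.rpow_two]
  refine Real.rpow_le_rpow_of_exponent_ge hc hc1 ?_
  rw [le_div_iff₀ (by linarith)]
  linarith

theorem deviationMajorant_add_le {b : ℝ} (hα : 0 < α) (hb : 0 ≤ b) (hβ0 : 0 ≤ β) (hβ1 : β < 1)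
    (hc : 0 < c) (hc1 : c ≤ 1) (hy : 1 ≤ y) :
    deviationMajorant α c β (y + b) ≤
      (4 / α * (1 + b) + 2 * crossoverScale α β) * (1 / (y * c ^ ((2 - β) / (1 - β)))) +
        4 / α * ((y - 1) ^ β / (y * c ^ 2)) := by
  have hX := crossoverScale_pos (β := β) (mul_pos hc hα)
  calc deviationMajorant α c β (y + b)
      ≤ 2 * (2 / (c * α) * (y + b) ^ β + crossoverScale (c * α) β) / (c * (y + b)) := by
        unfold deviationMajorant
        gcongr
        exact sumMajorant_le (mul_pos hc hα) hβ0 hβ1 (by linarith)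
    _ ≤ 2 * (2 / (c * α) * ((y - 1) ^ β + (1 + b)) + crossoverScale (c * α) β) / (c * y) := by
        gcongr
        · exact add_rpow_le_sub_one_rpow_add hy hb hβ0 hβ1.le
        · linarith
    _ = (4 / α * (1 + b) * (1 / c ^ 2) + 2 * (crossoverScale (c * α) β / c)) / y +
          4 / α * ((y - 1) ^ β / (y * c ^ 2)) := by field_simp; ring
    _ ≤ (4 / α * (1 + b) * (1 / c ^ ((2 - β) / (1 - β))) +
            2 * (crossoverScale α β / c ^ ((2 - β) / (1 - β)))) / y +
          4 / α * ((y - 1) ^ β / (y * c ^ 2)) := by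
        rw [crossoverScale_mul_div hα hc hβ1]
        gcongr (_ * (_ / ?_) + _) / _ + _
        exact rpow_two_sub_div_one_sub_le_sq hc hc1 hβ0 hβ1
    _ = _ := by field_simp

end Majorants

section PolynomialSteps

/-- The polynomial step sizes `α_j = α (j + b) ^ (-β)`. -/
noncomputable def polyStep (α b β : ℝ) (j : ℕ) : ℝ := α * ((j : ℝ) + b) ^ (-β)

variable {α b β c : ℝ}

theorem polyStep_succ (α b β : ℝ) (j : ℕ) :
    polyStep α b β (j + 1) = α * ((j : ℝ) + b + 1) ^ (-β) := by
  rw [polyStep, Nat.cast_succ, add_right_comm]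

theorem polyStep_antitone (hα : 0 ≤ α) (hb : 0 < b) (hβ : 0 ≤ β) : Antitone (polyStep α b β) :=
  fun i j hij => mul_le_mul_of_nonneg_left
    (Real.rpow_le_rpow_of_nonpos (by positivity) (by gcongr) (by linarith)) hα

theorem add_le_rpow_inv_of_half_le_polyStep (hα : 0 ≤ α) (hb : 0 < b) (hβ : 0 < β) {K : ℕ}
    (h : 1 / 2 ≤ polyStep α b β K) : (K : ℝ) + b ≤ (2 * α) ^ β⁻¹ := by
  have hKb : (0 : ℝ) < K + b := by positivity
  rw [polyStep, Real.rpow_neg hKb.le, ← div_eq_mul_inv,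
    div_le_div_iff₀ two_pos (by positivity)] at h
  rw [Real.le_rpow_inv_iff_of_pos hKb.le (by positivity) hβ]
  linarith

/-- Raising the exponent by one costs a factor `2` if `α_K ≤ 1 / 2`; otherwise `K` is bounded in
terms of `α` and `β`. -/
theorem one_sub_mul_polyStep_pow_le (hα : 0 ≤ α) (hb : 0 < b) (hβ : 0 < β) (hc : 0 ≤ c)
    (hc1 : c ≤ 1) {i K : ℕ} (hi : 0 < i) (hiK : i ≤ K) (hK : 0 ≤ 1 - c * polyStep α b β K)
    (m : ℕ) :
    (1 - c * polyStep α b β K) ^ m ≤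
      2 * (1 - c * polyStep α b β K) ^ (m + 1) + (2 * α) ^ β⁻¹ / i := by
  have hi' : (0 : ℝ) < i := by exact_mod_cast hi
  have hstep : 0 ≤ polyStep α b β K := by unfold polyStep; positivity
  rcases le_total (polyStep α b β K) (1 / 2) with hsmall | hlarge
  · have hhalf : 1 ≤ 2 * (1 - c * polyStep α b β K) := by
      linarith [mul_le_of_le_one_left hstep hc1]
    calc (1 - c * polyStep α b β K) ^ m
        ≤ 2 * (1 - c * polyStep α b β K) * (1 - c * polyStep α b β K) ^ m :=
          le_mul_of_one_le_left (by positivity) hhalf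
      _ = 2 * (1 - c * polyStep α b β K) ^ (m + 1) := by ring
      _ ≤ _ := le_add_of_nonneg_right (by positivity)
  · have hbound : (i : ℝ) ≤ (2 * α) ^ β⁻¹ :=
      calc (i : ℝ) ≤ K + b := by
            have : (i : ℝ) ≤ K := by exact_mod_cast hiK
            linarith
        _ ≤ (2 * α) ^ β⁻¹ := add_le_rpow_inv_of_half_le_polyStep hα hb hβ hlarge
    calc (1 - c * polyStep α b β K) ^ m ≤ 1 :=
          pow_le_one₀ hK (by linarith [mul_nonneg hc hstep])
      _ ≤ (2 * α) ^ β⁻¹ / i := (one_le_div hi').2 hbound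
      _ ≤ _ := le_add_of_nonneg_left (by positivity)

theorem one_sub_mul_polyStep_pow_div_le (hα : 0 ≤ α) (hb : 0 < b) (hβ0 : 0 < β) (hβ1 : β < 1)
    (hc : 0 < c) (hc1 : c ≤ 1) {i K : ℕ} (hi : 0 < i) (hiK : i ≤ K)
    (hK : 0 ≤ 1 - c * polyStep α b β K) (m : ℕ) :
    (1 - c * polyStep α b β K) ^ m / c ≤
      2 * ((1 - c * polyStep α b β K) ^ (m + 1) / c) +
        (2 * α) ^ β⁻¹ * (1 / (i * c ^ ((2 - β) / (1 - β)))) := by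
  have hcpow : c ^ ((2 - β) / (1 - β)) ≤ c :=
    (rpow_two_sub_div_one_sub_le_sq hc hc1 hβ0.le hβ1).trans
      (pow_le_of_le_one hc.le hc1 two_ne_zero)
  calc (1 - c * polyStep α b β K) ^ m / c
      ≤ (2 * (1 - c * polyStep α b β K) ^ (m + 1) + (2 * α) ^ β⁻¹ / i) / c := by
        gcongr
        exact one_sub_mul_polyStep_pow_le hα hb hβ0 hc.le hc1 hi hiK hK m
    _ = 2 * ((1 - c * polyStep α b β K) ^ (m + 1) / c) + (2 * α) ^ β⁻¹ * (1 / (i * c)) := by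
        ring
    _ ≤ _ := by gcongr

theorem norm_sumProd_polyStep_le {R : Type*} [SeminormedRing R] [Module ℝ R] [NormOneClass R]
    {A : R} (hα : 0 < α) (hb : 0 ≤ b) (hβ0 : 0 ≤ β) (hβ1 : β < 1) (hc : 0 < c)
    (hA : ∀ j, ‖1 - polyStep α b β j • A‖ ≤ 1 - c * polyStep α b β j) {i K : ℕ} (hiK : i ≤ K) :
    ‖sumProd (fun j => 1 - polyStep α b β j • A) i K‖ ≤ sumMajorant (c * α) β (i + b) := by
  refine norm_sumProd_le (V := fun i => sumMajorant (c * α) β (i + b)) hA (fun k _ => ?_)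
    (sumMajorant_nonneg (by positivity) (by positivity)) hiK
  rw [polyStep_succ, Nat.cast_succ, add_right_comm (k : ℝ) 1, ← mul_assoc]
  exact sumMajorant_supersolution (by positivity) hβ0 hβ1 (by positivity)

theorem norm_polyStep_smul_sumProd_sub_le {R : Type*} [SeminormedRing R] [NormedAlgebra ℝ R]
    [NormOneClass R] {A B : R} (hα : 0 < α) (hb : 0 < b) (hβ0 : 0 ≤ β) (hβ1 : β < 1)
    (hc : 0 < c) (hAB : A * B = 1)
    (hA : ∀ j, ‖1 - polyStep α b β j • A‖ ≤ 1 - c * polyStep α b β j) {i K : ℕ} (hi : 1 ≤ i)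
    (hiK : i ≤ K) :
    ‖polyStep α b β i • sumProd (fun j => 1 - polyStep α b β j • A) i K - B‖ ≤
      deviationMajorant α c β (i + b) + (1 - c * polyStep α b β K) ^ (K - i) * ‖B‖ := by
  refine norm_smul_sumProd_sub_le (U := fun i => deviationMajorant α c β (i + b)) hAB hc.le
    (polyStep_antitone hα.le hb hβ0) hA
    (fun k _ hk => norm_sumProd_polyStep_le hα hb.le hβ0 hβ1 hc hA hk) (fun k hk _ => ?_)
    (deviationMajorant_nonneg hα hc (by positivity)) hi hiK
  have hk' : (1 : ℝ) ≤ k := by exact_mod_cast hk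
  rw [polyStep_succ, Nat.cast_succ, add_right_comm (k : ℝ) 1]
  exact deviationMajorant_supersolution hα hc hβ0 hβ1.le (by linarith)

theorem pointwise_bound_deviation_Psi_from_inverse_general
    (α b β : ℝ) (hα : 0 < α) (hb : 0 < b) (hβ0 : 0 < β) (hβ1 : β < 1) :
    ∃ C : ℝ, 0 < C ∧
      ∀ (R : Type*) [SeminormedRing R] [NormedAlgebra ℝ R] [NormOneClass R] (A B : R) (c : ℝ),
        A * B = 1 → 0 < c → c ≤ 1 →
        (∀ j, ‖1 - polyStep α b β j • A‖ ≤ 1 - c * polyStep α b β j) → ‖B‖ ≤ 1 / c →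
        ∀ i K : ℕ, 1 ≤ i → i ≤ K →
          ‖polyStep α b β i • sumProd (fun j => 1 - polyStep α b β j • A) i K - B‖ ≤
            C * (1 / ((i : ℝ) * c ^ ((2 - β) / (1 - β)))
              + ((i : ℝ) - 1) ^ β / ((i : ℝ) * c ^ 2)
              + (1 - c * polyStep α b β K) ^ (K - i + 1) / c) := by
  have hX := crossoverScale_pos (β := β) hα
  set C₁ : ℝ := 4 / α * (1 + b) + 2 * crossoverScale α β
  have hC₁_pos : 0 < C₁ := by positivity
  set C : ℝ := C₁ + (2 * α) ^ β⁻¹ + 4 / α + 2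
  have hroot : 0 < (2 * α) ^ β⁻¹ := by positivity
  have hα_inv : 0 < 4 / α := by positivity
  refine ⟨C, by positivity, ?_⟩
  intro R _ _ _ A B c hAB hc hc1 hA hB i K hi hiK
  have hi' : (1 : ℝ) ≤ i := by exact_mod_cast hi
  have hK : 0 ≤ 1 - c * polyStep α b β K := (norm_nonneg _).trans (hA K)
  calc ‖polyStep α b β i • sumProd (fun j => 1 - polyStep α b β j • A) i K - B‖
      ≤ deviationMajorant α c β (i + b) + (1 - c * polyStep α b β K) ^ (K - i) * ‖B‖ :=
        norm_polyStep_smul_sumProd_sub_le hα hb hβ0.le hβ1 hc hAB hA hi hiK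
    _ ≤ deviationMajorant α c β (i + b) + (1 - c * polyStep α b β K) ^ (K - i) / c := by
        rw [div_eq_mul_one_div (_ ^ _)]
        gcongr
    _ ≤ _ := add_le_add (deviationMajorant_add_le hα hb.le hβ0.le hβ1 hc hc1 hi')
        (one_sub_mul_polyStep_pow_div_le hα.le hb hβ0 hβ1 hc hc1 hi hiK hK (K - i))
    _ = (C₁ + (2 * α) ^ β⁻¹) * (1 / ((i : ℝ) * c ^ ((2 - β) / (1 - β))))
          + 4 / α * (((i : ℝ) - 1) ^ β / ((i : ℝ) * c ^ 2))
          + 2 * ((1 - c * polyStep α b β K) ^ (K - i + 1) / c) := by ring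
    _ ≤ C * (1 / ((i : ℝ) * c ^ ((2 - β) / (1 - β))))
          + C * (((i : ℝ) - 1) ^ β / ((i : ℝ) * c ^ 2))
          + C * ((1 - c * polyStep α b β K) ^ (K - i + 1) / c) := by
        gcongr <;> linarith
    _ = _ := by ring

end PolynomialSteps

open scoped Matrix.Norms.Operator

theorem normInf_eq_linfty_opNorm {n : Type*} [Fintype n] [Nonempty n] (M : Matrix n n ℝ) :
    normInf M = ‖M‖ := by
  rw [Matrix.linfty_opNorm_def, ← sup'_eq_sup univ_nonempty,
    apply_sup'_eq_sup'_comp univ_nonempty _ NNReal.coe_max]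
  simp [normInf, Function.comp_def]

/-- Pointwise bound on the deviation of Ψ_i^K from A⁻¹
(equation (13) in the proof of Lemma 4). -/
theorem pointwise_bound_deviation_Psi_from_inverse
    (α b β : ℝ) (hα : 0 < α) (hb : 0 < b) (hβ0 : 0 < β) (hβ1 : β < 1) :
    ∃ C : ℝ, 0 < C ∧
      ∀ (n : Type) [Fintype n] [Nonempty n] [DecidableEq n],
        ∀ (A : Matrix n n ℝ) (c : ℝ), IsUnit A → 0 < c → c ≤ 1 →
          (∀ j : ℕ, normInf ((1 : Matrix n n ℝ)
              - (α * ((j : ℝ) + b) ^ (-β)) • A) ≤ 1 - c * (α * ((j : ℝ) + b) ^ (-β))) →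
          normInf A⁻¹ ≤ 1 / c →
          ∀ i K : ℕ, 1 ≤ i → i ≤ K →
            normInf (Psi A (fun j => α * ((j : ℝ) + b) ^ (-β)) i K - A⁻¹) ≤
              C * (1 / ((i : ℝ) * c ^ ((2 - β) / (1 - β)))
                + ((i : ℝ) - 1) ^ β / ((i : ℝ) * c ^ 2)
                + (1 - c * (α * ((K : ℝ) + b) ^ (-β))) ^ (K - i + 1) / c) := by
  obtain ⟨C, hC, hbound⟩ := pointwise_bound_deviation_Psi_from_inverse_general α b β hα hb hβ0 hβ1
  simp only [normInf_eq_linfty_opNorm]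
  exact ⟨C, hC, fun n _ _ _ A c hA => hbound _ A A⁻¹ c
    (Matrix.mul_nonsing_inv A ((Matrix.isUnit_iff_isUnit_det A).1 hA))⟩
end

section
/- Lipschitz continuity of the Poisson-equation solution in Q (claim in the proof of Theorem 1). In the finite MDP setting with the asynchronous Q-learning operator F, let Ỹ := S×A×S, let P̃ be a row-stochastic matrix indexed by Ỹ with stationary distribution μ̃, and suppose there exist c₀ > 0 and κ ∈ (0,1) such that ∑_{y'∈Ỹ} |(P̃^t)(y,y') − μ̃(y')| ≤ c₀ κ^t for all y ∈ Ỹ and all integers t ≥ 0. For Q : S×A → ℝ define X_Q(y) := ∑_{t=0}^∞ ∑_{y'∈Ỹ} ((P̃^t)(y,y') − μ̃(y')) F(Q,y') (the series converges absolutely). Then for all Q, Q' : S×A → ℝ and every y ∈ Ỹ: ‖X_Q(y) − X_{Q'}(y)‖∞ ≤ (2c₀/(1−κ)) · ‖Q − Q'‖∞, where ‖Q‖∞ = max_{(s,a)} |Q(s,a)|. -/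
open Finset

/-!
At the visited pair the terms `-Q(s₀, a₀) + Q(s₀, a₀)` of `F(Q, y)` cancel and leave
`r + γ max Q(s₁, ·)`, and elsewhere `F(Q, y)` is `Q` itself; since a maximum is 1-Lipschitz, every
entry of `F(·, y)` is `max 1 |γ|`-Lipschitz for the sup norm. The Poisson series is linear in the
function it is applied to, and geometric mixing bounds it by `c₀ ∑ₜ κᵗ = c₀ / (1 - κ)` times the
sup norm of that function.
-/

theorem abs_sup'_sub_sup'_le {ι α : Type*} [AddCommGroup α] [LinearOrder α] [IsOrderedAddMonoid α]
    {s : Finset ι} (hs : s.Nonempty) {f g : ι → α} {D : α} (hfg : ∀ i ∈ s, |f i - g i| ≤ D) :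
    |s.sup' hs f - s.sup' hs g| ≤ D := by
  rw [abs_sub_le_iff, sub_le_iff_le_add, sub_le_iff_le_add]
  constructor <;> refine sup'_le _ _ fun i hi => ?_
  · exact (sub_le_iff_le_add.1 (abs_sub_le_iff.1 (hfg i hi)).1).trans
      (add_le_add_right (le_sup' g hi) D)
  · exact (sub_le_iff_le_add.1 (abs_sub_le_iff.1 (hfg i hi)).2).trans
      (add_le_add_right (le_sup' f hi) D)

theorem sup'_abs_nonneg {ι α : Type*} [AddCommGroup α] [LinearOrder α] [IsOrderedAddMonoid α]
    {s : Finset ι} (hs : s.Nonempty) (f : ι → α) : 0 ≤ s.sup' hs fun i => |f i| :=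
  let ⟨_, hi⟩ := hs
  (abs_nonneg _).trans (le_sup' (fun i => |f i|) hi)

section AsyncQLearning

variable {S A : Type*} [Fintype A] [Nonempty A] [DecidableEq S] [DecidableEq A]

/-- The asynchronous Q-learning operator `F(Q, y)` at the transition sample `y = (s₀, a₀, s₁)`,
written as `Q` plus the temporal-difference error placed at the visited pair `(s₀, a₀)`. -/
def asyncQLearning (r : S → A → ℝ) (γ : ℝ) (Q : S → A → ℝ) (y : S × A × S) (s : S) (a : A) : ℝ :=
  (if (y.1, y.2.1) = (s, a) then
    r y.1 y.2.1 + γ * (univ.sup' univ_nonempty (fun a' => Q y.2.2 a')) - Q y.1 y.2.1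
   else 0) + Q s a

theorem asyncQLearning_eq_ite (r : S → A → ℝ) (γ : ℝ) (Q : S → A → ℝ) (y : S × A × S)
    (s : S) (a : A) :
    asyncQLearning r γ Q y s a =
      if (y.1, y.2.1) = (s, a) then r s a + γ * univ.sup' univ_nonempty (Q y.2.2) else Q s a := by
  unfold asyncQLearning
  split_ifs with hvisit
  · obtain ⟨rfl, rfl⟩ := Prod.mk.inj hvisit
    exact sub_add_cancel _ _
  · exact zero_add _

theorem abs_asyncQLearning_sub_le (r : S → A → ℝ) (γ : ℝ) {Q Q' : S → A → ℝ} {D : ℝ}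
    (hQ : ∀ s a, |Q s a - Q' s a| ≤ D) (y : S × A × S) (s : S) (a : A) :
    |asyncQLearning r γ Q y s a - asyncQLearning r γ Q' y s a| ≤ max 1 |γ| * D := by
  have hD : 0 ≤ D := (abs_nonneg _).trans (hQ s a)
  rw [asyncQLearning_eq_ite, asyncQLearning_eq_ite]
  split_ifs
  · rw [add_sub_add_left_eq_sub, ← mul_sub, abs_mul]
    gcongr
    · exact le_max_right 1 |γ|
    · exact abs_sup'_sub_sup'_le univ_nonempty fun a' _ => hQ y.2.2 a'
  · exact (hQ s a).trans (le_mul_of_one_le_left hD (le_max_left 1 |γ|))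

end AsyncQLearning

theorem norm_sum_smul_le_sum_abs_mul {ι E : Type*} [SeminormedAddCommGroup E] [NormedSpace ℝ E]
    (s : Finset ι) (w : ι → ℝ) {f : ι → E} {C : ℝ} (hf : ∀ i ∈ s, ‖f i‖ ≤ C) :
    ‖∑ i ∈ s, w i • f i‖ ≤ (∑ i ∈ s, |w i|) * C := by
  rw [sum_mul]
  refine norm_sum_le_of_le s fun i hi => ?_
  rw [norm_smul, Real.norm_eq_abs]
  exact mul_le_mul_of_nonneg_left (hf i hi) (abs_nonneg _)

section PoissonSolution

variable {Y E : Type*} [Fintype Y] [DecidableEq Y] [NormedAddCommGroup E] [NormedSpace ℝ E]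

/-- The term `∑_{y'} (Pᵗ(y, y') - μ(y')) f(y')` of the Poisson series: the deviation at time `t`
of the expected value of `f` along the chain started at `y` from its mean under `μ`. -/
def poissonTerm (P : Matrix Y Y ℝ) (μ : Y → ℝ) (f : Y → E) (y : Y) (t : ℕ) : E :=
  ∑ y', ((P ^ t) y y' - μ y') • f y'

/-- The series solution `X(y) = ∑ₜ ∑_{y'} (Pᵗ(y, y') - μ(y')) f(y')` of the Poisson equation
`X - P X = f - μ f`. As a `tsum` it is `0` where the series does not converge. -/
noncomputable def poissonSolution (P : Matrix Y Y ℝ) (μ : Y → ℝ) (f : Y → E) (y : Y) : E :=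
  ∑' t, poissonTerm P μ f y t

variable {P : Matrix Y Y ℝ} {μ : Y → ℝ} {y : Y} {c₀ κ : ℝ}

theorem poissonTerm_sub (f g : Y → E) (t : ℕ) :
    poissonTerm P μ (f - g) y t = poissonTerm P μ f y t - poissonTerm P μ g y t := by
  simp only [poissonTerm, Pi.sub_apply, smul_sub, sum_sub_distrib]

theorem norm_poissonTerm_le (hmix : ∀ t : ℕ, ∑ y', |(P ^ t) y y' - μ y'| ≤ c₀ * κ ^ t)
    {f : Y → E} {C : ℝ} (hf : ∀ y', ‖f y'‖ ≤ C) (t : ℕ) :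
    ‖poissonTerm P μ f y t‖ ≤ c₀ * C * κ ^ t := by
  have hC : 0 ≤ C := (norm_nonneg _).trans (hf y)
  calc ‖poissonTerm P μ f y t‖
      ≤ (∑ y', |(P ^ t) y y' - μ y'|) * C := norm_sum_smul_le_sum_abs_mul _ _ fun y' _ => hf y'
    _ ≤ c₀ * κ ^ t * C := mul_le_mul_of_nonneg_right (hmix t) hC
    _ = c₀ * C * κ ^ t := mul_right_comm _ _ _

theorem norm_poissonSolution_le (hκ0 : 0 ≤ κ) (hκ1 : κ < 1)
    (hmix : ∀ t : ℕ, ∑ y', |(P ^ t) y y' - μ y'| ≤ c₀ * κ ^ t)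
    {f : Y → E} {C : ℝ} (hf : ∀ y', ‖f y'‖ ≤ C) :
    ‖poissonSolution P μ f y‖ ≤ c₀ / (1 - κ) * C := by
  have hgeom : HasSum (fun t : ℕ => c₀ * C * κ ^ t) (c₀ / (1 - κ) * C) := by
    rw [div_mul_eq_mul_div, div_eq_mul_inv]
    exact (hasSum_geometric_of_lt_one hκ0 hκ1).mul_left _
  exact tsum_of_norm_bounded hgeom (norm_poissonTerm_le hmix hf)

variable [CompleteSpace E]

theorem summable_poissonTerm (hκ0 : 0 ≤ κ) (hκ1 : κ < 1)
    (hmix : ∀ t : ℕ, ∑ y', |(P ^ t) y y' - μ y'| ≤ c₀ * κ ^ t) (f : Y → E) :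
    Summable (poissonTerm P μ f y) :=
  .of_norm_bounded ((summable_geometric_of_lt_one hκ0 hκ1).mul_left _)
    (norm_poissonTerm_le hmix (norm_le_pi_norm f))

theorem poissonSolution_sub (hκ0 : 0 ≤ κ) (hκ1 : κ < 1)
    (hmix : ∀ t : ℕ, ∑ y', |(P ^ t) y y' - μ y'| ≤ c₀ * κ ^ t) (f g : Y → E) :
    poissonSolution P μ (f - g) y = poissonSolution P μ f y - poissonSolution P μ g y := by
  simp only [poissonSolution, poissonTerm_sub]
  exact (summable_poissonTerm hκ0 hκ1 hmix f).tsum_sub (summable_poissonTerm hκ0 hκ1 hmix g)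

theorem norm_poissonSolution_sub_le (hκ0 : 0 ≤ κ) (hκ1 : κ < 1)
    (hmix : ∀ t : ℕ, ∑ y', |(P ^ t) y y' - μ y'| ≤ c₀ * κ ^ t)
    {f g : Y → E} {C : ℝ} (hfg : ∀ y', ‖f y' - g y'‖ ≤ C) :
    ‖poissonSolution P μ f y - poissonSolution P μ g y‖ ≤ c₀ / (1 - κ) * C := by
  rw [← poissonSolution_sub hκ0 hκ1 hmix]
  exact norm_poissonSolution_le hκ0 hκ1 hmix hfg

end PoissonSolution

theorem lipschitz_poisson_solution_in_Q_general
    {S A : Type*} [Fintype S] [Fintype A] [Nonempty S] [Nonempty A]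
    [DecidableEq S] [DecidableEq A]
    (r : S → A → ℝ) (γ : ℝ)
    (Pt : Matrix (S × A × S) (S × A × S) ℝ) (μ : S × A × S → ℝ)
    {c₀ κ : ℝ} (hκ0 : 0 ≤ κ) (hκ1 : κ < 1) {y : S × A × S}
    (hmix : ∀ t : ℕ, ∑ y', |(Pt ^ t) y y' - μ y'| ≤ c₀ * κ ^ t)
    (Q Q' : S → A → ℝ) :
    univ.sup' univ_nonempty (fun sa : S × A =>
        |poissonSolution Pt μ (fun y' => asyncQLearning r γ Q y' sa.1 sa.2) y -
          poissonSolution Pt μ (fun y' => asyncQLearning r γ Q' y' sa.1 sa.2) y|) ≤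
      (max 1 |γ| * c₀ / (1 - κ)) *
        univ.sup' univ_nonempty (fun sa : S × A => |Q sa.1 sa.2 - Q' sa.1 sa.2|) := by
  set D := univ.sup' univ_nonempty (fun sa : S × A => |Q sa.1 sa.2 - Q' sa.1 sa.2|)
  have hQ : ∀ s a, |Q s a - Q' s a| ≤ D := fun s a =>
    le_sup' (fun sa : S × A => |Q sa.1 sa.2 - Q' sa.1 sa.2|) (mem_univ (s, a))
  refine sup'_le _ _ fun ⟨s, a⟩ _ => ?_
  have hentry : ∀ y', ‖asyncQLearning r γ Q y' s a - asyncQLearning r γ Q' y' s a‖ ≤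
      max 1 |γ| * D := fun y' => abs_asyncQLearning_sub_le r γ hQ y' s a
  rw [mul_div_assoc, mul_comm (max 1 |γ|), mul_assoc]
  exact norm_poissonSolution_sub_le hκ0 hκ1 hmix hentry

/-- Lipschitz continuity of the Poisson-equation solution in Q
(claim in the proof of Theorem 1). -/
theorem lipschitz_poisson_solution_in_Q
    {S A : Type*} [Fintype S] [Fintype A] [Nonempty S] [Nonempty A]
    [DecidableEq S] [DecidableEq A]
    (P : S → A → S → ℝ)
    (hPnn : ∀ s a s', 0 ≤ P s a s')
    (hPsum : ∀ s a, ∑ s', P s a s' = 1)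
    (r : S → A → ℝ) (γ : ℝ) (hγ0 : 0 ≤ γ) (hγ1 : γ < 1)
    -- asynchronous Q-learning operator
    (F : (S → A → ℝ) → (S × A × S) → (S → A → ℝ))
    (hF : ∀ Q (y : S × A × S) s a, F Q y s a =
      (if (y.1, y.2.1) = (s, a) then
        r y.1 y.2.1 + γ * (univ.sup' univ_nonempty (fun a' => Q y.2.2 a')) - Q y.1 y.2.1
       else 0) + Q s a)
    -- the Markov chain on transition samples
    (Pt : Matrix (S × A × S) (S × A × S) ℝ)
    (hPtnn : ∀ y y', 0 ≤ Pt y y') (hPtsum : ∀ y, ∑ y', Pt y y' = 1)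
    (μ : S × A × S → ℝ) (hμnn : ∀ y, 0 ≤ μ y) (hμsum : ∑ y, μ y = 1)
    (hstat : ∀ y', ∑ y, μ y * Pt y y' = μ y')
    (c₀ κ : ℝ) (hc₀ : 0 < c₀) (hκ0 : 0 < κ) (hκ1 : κ < 1)
    (hmix : ∀ (y : S × A × S) (t : ℕ), ∑ y', |(Pt ^ t) y y' - μ y'| ≤ c₀ * κ ^ t)
    -- the Poisson-equation solutions X_Q
    (X : (S → A → ℝ) → (S × A × S) → (S → A → ℝ))
    (hX : ∀ (Q : S → A → ℝ) (y : S × A × S) (s : S) (a : A),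
      X Q y s a = ∑' t : ℕ, ∑ y', ((Pt ^ t) y y' - μ y') * F Q y' s a) :
    ∀ (Q Q' : S → A → ℝ) (y : S × A × S),
      univ.sup' univ_nonempty
          (fun sa : S × A => |X Q y sa.1 sa.2 - X Q' y sa.1 sa.2|) ≤
        (2 * c₀ / (1 - κ)) *
          univ.sup' univ_nonempty (fun sa : S × A => |Q sa.1 sa.2 - Q' sa.1 sa.2|) := by
  intro Q Q' y
  have hmax : max 1 |γ| ≤ 2 := max_le one_le_two (abs_le.2 ⟨by linarith, by linarith⟩)
  simp only [hX, hF]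
  exact (lipschitz_poisson_solution_in_Q_general r γ Pt μ hκ0.le hκ1 (hmix y) Q Q').trans
    (by gcongr; exact sup'_abs_nonneg univ_nonempty _)
end
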